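/- arXiv:1911.04777 — 2 statements merged into one kernel-verified Lean document; each statement's English description precedes it below -/
import Mathlib

section
/- Let p ≡ −1 (mod 16) be a prime. Then the class numbers of the quadratic fields ℚ(√p), ℚ(√2p), ℚ(√2) and of the biquadratic field F = ℚ(√2, √p) are all odd. -/
open NumberField IntermediateField

section General
set_option linter.unusedSectionVars false
open scoped Pointwise nonZeroDivisors

theorem isPrincipal_mul' {R : Type*} [CommRing R] {I J : Ideal R} (hI : I.IsPrincipal)
    (hJ : J.IsPrincipal) : (I * J).IsPrincipal := by
  obtain ⟨a, rfl⟩ := hI.principal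
  obtain ⟨b, rfl⟩ := hJ.principal
  exact ⟨⟨a * b, by
    simp only [Ideal.submodule_span_eq, Ideal.span_singleton_mul_span_singleton]⟩⟩

theorem isPrincipal_pow' {R : Type*} [CommRing R] {I : Ideal R} (hI : I.IsPrincipal) (n : ℕ) :
    (I ^ n).IsPrincipal := by
  obtain ⟨a, rfl⟩ := hI.principal
  exact ⟨⟨a ^ n, by
    simp only [Ideal.submodule_span_eq, Ideal.span_singleton_pow]⟩⟩

theorem isPrincipal_of_sq_of_odd {R : Type*} [CommRing R] [IsDedekindDomain R] {I : Ideal R}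
    (hI : I ≠ ⊥) {h : ℕ} (hh : Odd h) (h2 : (I ^ 2).IsPrincipal) (h1 : (I ^ h).IsPrincipal) :
    I.IsPrincipal := by
  have hI0 : I ∈ (Ideal R)⁰ := mem_nonZeroDivisors_of_ne_zero hI
  rw [← ClassGroup.mk0_eq_one_iff (pow_mem hI0 _)] at h1 h2
  rw [← ClassGroup.mk0_eq_one_iff hI0]
  have e : ∀ n, ClassGroup.mk0 ⟨I ^ n, pow_mem hI0 n⟩ = (ClassGroup.mk0 ⟨I, hI0⟩) ^ n := by
    intro n
    rw [← map_pow]; rfl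
  rw [e] at h1 h2
  obtain ⟨m, rfl⟩ := hh
  rw [pow_succ, pow_mul, h2, one_pow, one_mul] at h1
  exact h1

theorem isPrincipal_pow_classNumber {k : Type*} [Field k] [NumberField k] {I : Ideal (𝓞 k)}
    (hI : I ≠ ⊥) : (I ^ classNumber k).IsPrincipal := by
  have hI0 : I ∈ (Ideal (𝓞 k))⁰ := mem_nonZeroDivisors_of_ne_zero hI
  rw [← ClassGroup.mk0_eq_one_iff (pow_mem hI0 _)]
  have : ClassGroup.mk0 ⟨I ^ classNumber k, pow_mem hI0 _⟩
      = (ClassGroup.mk0 ⟨I, hI0⟩) ^ classNumber k := by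
    rw [← map_pow]; rfl
  rw [this]
  exact pow_card_eq_one

variable {k K : Type*} [Field k] [NumberField k] [Field K] [NumberField K] [Algebra k K]
  [Algebra.IsQuadraticExtension k K]

theorem smul_ideal_span (σ : Gal(K/k)) (x : 𝓞 K) :
    σ • (Ideal.span {x} : Ideal (𝓞 K)) = Ideal.span {σ • x} := by
  rw [Ideal.pointwise_smul_def, Ideal.map_span, Set.image_singleton]
  rfl

theorem gal_eq_one_or (σ : Gal(K/k)) (hσ : σ ≠ 1) (g : Gal(K/k)) : g = 1 ∨ g = σ := by
  have hc : Nat.card Gal(K/k) = 2 := by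
    rw [IsGalois.card_aut_eq_finrank, Algebra.IsQuadraticExtension.finrank_eq_two]
  have := Nat.card_eq_two_iff' (1 : Gal(K/k)) |>.1 hc
  obtain ⟨y, hy, hy'⟩ := this
  by_cases hg : g = 1
  · exact Or.inl hg
  · right
    rw [hy' g hg, hy' σ hσ]

theorem gal_smul_smul (σ : Gal(K/k)) (hσ : σ ≠ 1) : σ * σ = 1 := by
  rcases gal_eq_one_or σ hσ (σ * σ) with h | h
  · exact h
  · exact absurd (by simpa using h) hσ

theorem invariant_step (σ : Gal(K/k)) (hσ : σ ≠ 1) (δ : 𝓞 K) (hδ : σ • δ = -δ)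
    (hram : ∀ P : Ideal (𝓞 K), P.IsPrime → P ≠ ⊥ → 2 * δ ∈ P → P.IsPrincipal)
    (J : Ideal (𝓞 K)) (hJ : J ≠ ⊥) (hJt : J ≠ ⊤) (hinv : σ • J = J) :
    ∃ Q : Ideal (𝓞 K), Q ≠ ⊥ ∧ Q ≠ ⊤ ∧ σ • Q = Q ∧ Q ∣ J ∧ (Q ^ classNumber k).IsPrincipal := by
  obtain ⟨P, hPm, hJP⟩ := Ideal.exists_le_maximal J hJt
  have hPp : P.IsPrime := hPm.isPrime
  have hPb : P ≠ ⊥ := fun h => hJ (by rw [h] at hJP; exact le_bot_iff.1 hJP)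
  by_cases hin : σ ∈ Ideal.inertia Gal(K/k) P
  · have hst : σ • P = P := by
      have := Ideal.inertia_le_stabilizer (M := Gal(K/k)) P hin
      exact this
    refine ⟨P, hPb, hPp.ne_top, hst, Ideal.dvd_iff_le.2 hJP, isPrincipal_pow' (hram P hPp hPb ?_) _⟩
    have := AddSubgroup.mem_inertia.1 hin δ
    rw [hδ] at this
    have h2 : -δ - δ ∈ P := this
    have : 2 * δ = -(-δ - δ) := by ring
    rw [this]
    exact neg_mem h2
  · let p : Ideal (𝓞 k) := P.under (𝓞 k)
    have hpm : p.IsMaximal := Ideal.IsMaximal.under (𝓞 k) P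
    have hpb : p ≠ ⊥ := by
      intro h
      exact hPb (Ideal.eq_bot_of_comap_eq_bot h)
    have hlo : P.LiesOver p := ⟨rfl⟩
    have hin1 : Ideal.inertia Gal(K/k) P = ⊥ := by
      rw [eq_bot_iff]
      intro g hg
      rcases gal_eq_one_or σ hσ g with rfl | rfl
      · exact one_mem _
      · exact absurd hg hin
    have hcard := Ideal.card_inertia_eq_ramificationIdxIn (G := Gal(K/k)) p P
    rw [hin1, Subgroup.card_bot] at hcard
    have hmapb : p.map (algebraMap (𝓞 k) (𝓞 K)) ≠ ⊥ := Ideal.map_ne_bot_of_ne_bot hpb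
    refine ⟨p.map (algebraMap (𝓞 k) (𝓞 K)), hmapb, ?_, ?_, ?_, ?_⟩
    · intro h
      have : p.map (algebraMap (𝓞 k) (𝓞 K)) ≤ P := Ideal.map_comap_le
      rw [h] at this
      exact hPp.ne_top (top_le_iff.1 this)
    · rw [Ideal.pointwise_smul_def, Ideal.map_map]
      congr 1
      ext x
      change ((σ • (algebraMap (𝓞 k) (𝓞 K) x) : 𝓞 K) : K) = _
      rw [smul_algebraMap]
    · rw [Ideal.map_algebraMap_eq_finsetProd_pow hpb]
      have hall : ∀ Q ∈ p.primesOver (𝓞 K), Q.IsPrime ∧ Q ≠ ⊥ ∧ J ≤ Q ∧ Q.ramificationIdx (𝓞 k) = 1 := by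
        rintro Q ⟨hQp, hQl⟩
        refine ⟨hQp, ?_, ?_, ?_⟩
        · exact Ideal.ne_bot_of_liesOver_of_ne_bot hpb Q
        · obtain ⟨g, rfl⟩ := Ideal.exists_smul_eq_of_isGaloisGroup p P Q Gal(K/k)
          rcases gal_eq_one_or σ hσ g with rfl | rfl
          · simpa using hJP
          · rw [← hinv]
            exact Ideal.pointwise_smul_le_pointwise_smul_iff.2 hJP
        · rw [← Ideal.ramificationIdxIn_eq_ramificationIdx p Q Gal(K/k), ← hcard]
      refine (dvd_of_eq ?_).trans (Finset.prod_primes_dvd (s := (p.primesOver (𝓞 K)).toFinset) J ?_ ?_)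
      · refine Finset.prod_congr rfl ?_
        intro Q hQ
        rw [(hall Q (by simpa using hQ)).2.2.2, pow_one]
      · intro Q hQ
        have := hall Q (by simpa using hQ)
        exact Ideal.prime_of_isPrime this.2.1 this.1
      · intro Q hQ
        have := hall Q (by simpa using hQ)
        exact Ideal.dvd_iff_le.2 this.2.2.1
    · rw [← Ideal.map_pow]
      exact (isPrincipal_pow_classNumber hpb).map_ringHom _

theorem invariant_principal (σ : Gal(K/k)) (hσ : σ ≠ 1) (δ : 𝓞 K) (hδ : σ • δ = -δ)
    (hram : ∀ P : Ideal (𝓞 K), P.IsPrime → P ≠ ⊥ → 2 * δ ∈ P → P.IsPrincipal)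
    (J : Ideal (𝓞 K)) (hJ : J ≠ ⊥) (hinv : σ • J = J) :
    (J ^ classNumber k).IsPrincipal := by
  induction hn : Ideal.absNorm J using Nat.strong_induction_on generalizing J with
  | _ n ih =>
    by_cases hJt : J = ⊤
    · rw [hJt, ← Ideal.one_eq_top, one_pow]
      exact ⟨⟨1, by simp⟩⟩
    · obtain ⟨Q, hQb, hQt, hQi, ⟨J', rfl⟩, hQp⟩ := invariant_step σ hσ δ hδ hram J hJ hJt hinv
      have hJ' : J' ≠ ⊥ := by
        rintro rfl
        exact hJ (by simp)
      rw [mul_pow]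
      refine isPrincipal_mul' hQp (ih (Ideal.absNorm J') ?_ J' hJ' ?_ rfl)
      · rw [← hn, map_mul]
        have h1 : Ideal.absNorm Q ≠ 0 := by rwa [Ne, Ideal.absNorm_eq_zero_iff]
        have h2 : Ideal.absNorm Q ≠ 1 := by rwa [Ne, Ideal.absNorm_eq_one_iff]
        have h3 : Ideal.absNorm J' ≠ 0 := by rwa [Ne, Ideal.absNorm_eq_zero_iff]
        have : 2 ≤ Ideal.absNorm Q := by omega
        nlinarith [Nat.pos_of_ne_zero h3]
      · rw [smul_mul', hQi] at hinv
        exact mul_left_cancel₀ hQb hinv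

theorem hilbert90' (σ : Gal(K/k)) (δ : 𝓞 K) (hδ0 : δ ≠ 0)
    (hδ : σ • δ = -δ) (a : K) (ha : a * σ a = 1) :
    ∃ b : 𝓞 K, b ≠ 0 ∧ (b : K) = a * σ b := by
  have ha0 : a ≠ 0 := by rintro rfl; simp at ha
  obtain ⟨b, hb0, hb⟩ : ∃ b : K, b ≠ 0 ∧ b = a * σ b := by
    by_cases h : a = -1
    · refine ⟨δ, by simpa using hδ0, ?_⟩
      have : σ (δ : K) = -(δ : K) := by
        have := congrArg (algebraMap (𝓞 K) K) hδ
        rw [map_neg] at this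
        exact this
      rw [this, h]; ring
    · refine ⟨1 + a, fun h' => h (by linear_combination h'), ?_⟩
      rw [map_add, map_one]
      linear_combination -ha
  obtain ⟨y, hy0, hy⟩ := IsAlgebraic.exists_integral_multiple (R := ℤ) (z := b)
      ((IsFractionRing.isAlgebraic_iff ℤ ℚ K).2 (Algebra.IsAlgebraic.isAlgebraic b))
  obtain ⟨B, hB⟩ : ∃ B : 𝓞 K, (B : K) = (y : K) * b :=
    ⟨⟨y • b, hy⟩, by rw [← zsmul_eq_mul]; rfl⟩
  refine ⟨B, ?_, ?_⟩
  · intro h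
    rw [h, show ((0 : 𝓞 K) : K) = 0 from map_zero (algebraMap (𝓞 K) K)] at hB
    rcases mul_eq_zero.1 hB.symm with h | h
    · exact hy0 (by exact_mod_cast h)
    · exact hb0 h
  · rw [hB, map_mul, map_intCast]
    linear_combination (y : K) * hb

theorem odd_classNumber_of_quadratic (σ : Gal(K/k)) (δ : 𝓞 K) (hδ0 : δ ≠ 0)
    (hδ : σ • δ = -δ) (hodd : Odd (classNumber k))
    (hram : ∀ P : Ideal (𝓞 K), P.IsPrime → P ≠ ⊥ → 2 * δ ∈ P → P.IsPrincipal)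
    (hnorm : ∀ u : (𝓞 k)ˣ, ∀ a : K, a * σ a = algebraMap k K (u : 𝓞 k) →
      ∃ v : (𝓞 K)ˣ, ((v : 𝓞 K) : K) * σ ((v : 𝓞 K) : K) = algebraMap k K (u : 𝓞 k)) :
    Odd (classNumber K) := by
  have hσ : σ ≠ 1 := by
    rintro rfl
    rw [one_smul] at hδ
    have h2 : 2 * δ = 0 := by linear_combination hδ
    rcases mul_eq_zero.1 h2 with h | h
    · exact two_ne_zero h
    · exact hδ0 h
  have hσσ := gal_smul_smul σ hσ
  have hss : ∀ x : 𝓞 K, σ • σ • x = x := fun x => by rw [smul_smul, hσσ, one_smul]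
  have hssI : ∀ x : Ideal (𝓞 K), σ • σ • x = x := fun x => by rw [smul_smul, hσσ, one_smul]
  rw [← Nat.not_even_iff_odd]
  intro heven
  obtain ⟨c, hc⟩ := exists_prime_orderOf_dvd_card (G := ClassGroup (𝓞 K)) 2 heven.two_dvd
  obtain ⟨⟨I, hI0⟩, rfl⟩ := ClassGroup.mk0_surjective c
  have hI : I ≠ ⊥ := nonZeroDivisors.ne_zero hI0
  have hI2 : (I ^ 2).IsPrincipal := by
    rw [← ClassGroup.mk0_eq_one_iff (pow_mem hI0 _)]
    rw [← pow_orderOf_eq_one (ClassGroup.mk0 ⟨I, hI0⟩), hc, ← map_pow]; rfl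
  have hInp : ¬ I.IsPrincipal := by
    rw [← ClassGroup.mk0_eq_one_iff hI0]
    intro h
    rw [h, orderOf_one] at hc
    omega
  apply hInp
  have hσI : σ • I ≠ ⊥ := by
    intro h
    apply hI
    rw [← hssI I, h, ← Ideal.zero_eq_bot, smul_zero]
  have hσI2 : ((σ • I) ^ 2).IsPrincipal := by
    obtain ⟨f, hf⟩ := hI2.principal
    refine ⟨⟨σ • f, ?_⟩⟩
    rw [← smul_pow', hf]
    exact smul_ideal_span σ f
  have hN : (I * σ • I).IsPrincipal := by
    refine isPrincipal_of_sq_of_odd (mul_ne_zero hI hσI) hodd ?_ ?_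
    · rw [mul_pow]; exact isPrincipal_mul' hI2 hσI2
    · refine invariant_principal σ hσ δ hδ hram _ (mul_ne_zero hI hσI) ?_
      rw [smul_mul', hssI, mul_comm]
  obtain ⟨f, hf⟩ := hI2.principal
  obtain ⟨g, hg⟩ := hN.principal
  rw [Ideal.submodule_span_eq] at hf hg
  have hf0 : f ≠ 0 := by
    rintro rfl
    exact pow_ne_zero 2 hI (by rw [hf]; simp)
  have hg0 : g ≠ 0 := by
    rintro rfl
    exact mul_ne_zero hI hσI (by rw [hg]; simp)
  -- `f • σ I = g • I`
  have h1 : Ideal.span {f} * σ • I = Ideal.span {g} * I := by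
    rw [← hf, ← hg]; ring
  have h2 : Ideal.span {σ • f} * I = Ideal.span {σ • g} * σ • I := by
    have := congrArg (σ • ·) h1
    simpa only [smul_mul', hssI, smul_ideal_span] using this
  have h3 : Ideal.span {f * σ • f} = Ideal.span {g * σ • g} := by
    rw [← Ideal.span_singleton_mul_span_singleton, ← Ideal.span_singleton_mul_span_singleton]
    apply mul_right_cancel₀ hI
    calc Ideal.span {f} * Ideal.span {σ • f} * I
        = Ideal.span {f} * (Ideal.span {σ • f} * I) := by ring
      _ = Ideal.span {σ • g} * (Ideal.span {f} * σ • I) := by rw [h2]; ring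
      _ = _ := by rw [h1]; ring
  obtain ⟨w, hw⟩ := Ideal.span_singleton_eq_span_singleton.1 h3
  have hσf0 : σ • f ≠ 0 := fun h => hf0 (by rw [← hss f, h, smul_zero])
  have hwinv : σ • (w : 𝓞 K) = w := by
    have := congrArg (σ • ·) hw
    simp only [smul_mul', hss] at this
    apply mul_left_cancel₀ (mul_ne_zero hf0 hσf0)
    rw [hw, mul_comm f, this, mul_comm]
  have hall : ∀ x : 𝓞 K, σ • x = x → ∃ y : 𝓞 k, algebraMap (𝓞 k) (𝓞 K) y = x := by
    intro x hx
    apply Algebra.IsInvariant.isInvariant (G := Gal(K/k)) (A := 𝓞 k)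
    intro γ
    rcases gal_eq_one_or σ hσ γ with rfl | rfl
    · rw [one_smul]
    · exact hx
  obtain ⟨u, hu⟩ := hall w hwinv
  have hwinv' : σ • ((w⁻¹ : (𝓞 K)ˣ) : 𝓞 K) = (w⁻¹ : (𝓞 K)ˣ) := by
    apply mul_left_cancel₀ w.ne_zero
    conv_lhs => rw [← hwinv]
    rw [← smul_mul']
    simp
  obtain ⟨u', hu'⟩ := hall _ hwinv'
  have huu : u * u' = 1 := by
    apply FaithfulSMul.algebraMap_injective (𝓞 k) (𝓞 K)
    rw [map_mul, hu, hu']; simp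
  let U : (𝓞 k)ˣ := ⟨u, u', huu, by rw [mul_comm, huu]⟩
  have hcoe : ∀ x : 𝓞 K, ((σ • x : 𝓞 K) : K) = σ (x : K) := fun x => rfl
  have hUw : algebraMap k K (u : k) = ((w : 𝓞 K) : K) := by
    rw [← hu]; rfl
  have hfK : (f : K) ≠ 0 := by simpa using hf0
  have hgK : (g : K) ≠ 0 := by simpa using hg0
  have hσfK : σ (f : K) ≠ 0 := by simpa using hf0
  obtain ⟨v, hv⟩ := hnorm U (g / f : K) (by
    change _ = algebraMap k K (u : k)
    rw [hUw, map_div₀]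
    have := congrArg (algebraMap (𝓞 K) K) hw
    rw [map_mul, map_mul, map_mul] at this
    change (f : K) * σ (f : K) * ((w : 𝓞 K) : K) = (g : K) * σ (g : K) at this
    field_simp
    linear_combination -this)
  have hvK : ((v : 𝓞 K) : K) ≠ 0 := by simp
  have hσvK : σ ((v : 𝓞 K) : K) ≠ 0 := by simp
  obtain ⟨b, hb0, hb⟩ := hilbert90' σ δ hδ0 hδ ((g : K) / f / (v : 𝓞 K)) (by
    rw [map_div₀, map_div₀]
    have := congrArg (algebraMap (𝓞 K) K) hw
    rw [map_mul, map_mul, map_mul] at this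
    change (f : K) * σ (f : K) * ((w : 𝓞 K) : K) = (g : K) * σ (g : K) at this
    have hv2 : ((v : 𝓞 K) : K) * σ ((v : 𝓞 K) : K) = ((w : 𝓞 K) : K) := by
      rw [hv]; exact hUw
    field_simp
    rw [← this, ← hv2]; ring)
  have hb' : (v : 𝓞 K) * f * b = g * σ • b := by
    apply RingOfIntegers.ext
    change ((v : 𝓞 K) : K) * (f : K) * (b : K) = (g : K) * σ (b : K)
    have hb2 : (b : K) * (f * (v : 𝓞 K)) = (g : K) * σ (b : K) := by
      nth_rewrite 1 [hb]
      field_simp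
    linear_combination hb2
  have hbI : Ideal.span {b} ≠ ⊥ := by simpa using hb0
  have hJinv : σ • (Ideal.span {b} * I) = Ideal.span {b} * I := by
    rw [smul_mul', smul_ideal_span]
    have hfg : Ideal.span {f * g} ≠ ⊥ := by simpa using ⟨hf0, hg0⟩
    apply mul_left_cancel₀ hfg
    have e1 : Ideal.span {(v : 𝓞 K)} = ⊤ := Ideal.span_singleton_eq_top.2 v.isUnit
    have e2 : Ideal.span {f} * Ideal.span {b} = Ideal.span {g} * Ideal.span {σ • b} := by
      rw [Ideal.span_singleton_mul_span_singleton, Ideal.span_singleton_mul_span_singleton, ← hb',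
        mul_assoc, ← Ideal.span_singleton_mul_span_singleton (v : 𝓞 K), e1, Ideal.top_mul]
    rw [← Ideal.span_singleton_mul_span_singleton]
    calc Ideal.span {f} * Ideal.span {g} * (Ideal.span {σ • b} * σ • I)
        = (Ideal.span {f} * σ • I) * (Ideal.span {g} * Ideal.span {σ • b}) := by ring
      _ = _ := by rw [← e2, h1]; ring
  have hJp : (Ideal.span {b} * I).IsPrincipal := by
    refine isPrincipal_of_sq_of_odd (mul_ne_zero hbI hI) hodd ?_
      (invariant_principal σ hσ δ hδ hram _ (mul_ne_zero hbI hI) hJinv)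
    rw [mul_pow]
    exact isPrincipal_mul' (isPrincipal_pow' ⟨⟨b, rfl⟩⟩ 2) hI2
  have hbI0 : Ideal.span {b} ∈ (Ideal (𝓞 K))⁰ := mem_nonZeroDivisors_of_ne_zero hbI
  rw [← ClassGroup.mk0_eq_one_iff hI0]
  rw [← ClassGroup.mk0_eq_one_iff (mul_mem hbI0 hI0)] at hJp
  have e3 : ClassGroup.mk0 ⟨Ideal.span {b} * I, mul_mem hbI0 hI0⟩
      = ClassGroup.mk0 ⟨Ideal.span {b}, hbI0⟩ * ClassGroup.mk0 ⟨I, hI0⟩ := by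
    rw [← map_mul]; rfl
  rw [e3, (ClassGroup.mk0_eq_one_iff hbI0).2 ⟨⟨b, rfl⟩⟩, one_mul] at hJp
  exact hJp

end General

section Arith

theorem no_neg_one (p : ℕ) (hp : p.Prime) (h4 : p % 4 = 3) (m : ℕ) (hm : m.Coprime p)
    (hm0 : m ≠ 0) (x y : ℚ) : x ^ 2 - (m * p : ℚ) * y ^ 2 ≠ -1 := by
  intro h
  have := Fact.mk hp
  have hy0 : y ≠ 0 := by
    rintro rfl
    nlinarith [sq_nonneg x]
  have hx := Rat.num_div_den x
  have hy := Rat.num_div_den y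
  have hxd : (x.den : ℚ) ≠ 0 := by exact_mod_cast x.den_ne_zero
  have hyd : (y.den : ℚ) ≠ 0 := by exact_mod_cast y.den_ne_zero
  have key : ((x.num.natAbs * y.den) ^ 2 + (x.den * y.den) ^ 2 : ℕ) =
      m * p * (y.num.natAbs * x.den) ^ 2 := by
    zify
    rw [mul_pow, mul_pow _ (x.den : ℤ), sq_abs, sq_abs]
    have : (((x.num ^ 2 * y.den ^ 2 + (x.den * y.den) ^ 2 : ℤ)) : ℚ) =
      ((m * p * (y.num ^ 2 * x.den ^ 2) : ℤ) : ℚ) := by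
      rw [← hx, ← hy] at h
      field_simp at h
      push_cast
      linear_combination h
    exact_mod_cast this
  have hN : y.num.natAbs * x.den ≠ 0 := by
    simp [hy0, x.den_ne_zero]
  set N := y.num.natAbs * x.den with hNdef
  have h1 := (Nat.eq_sq_add_sq_iff (n := m * p * N ^ 2)).1 ⟨_, _, key.symm⟩
  have h2 := h1 (q := p) (by
    rw [Nat.mem_primeFactors]
    refine ⟨hp, ⟨m * N ^ 2, by ring⟩, ?_⟩
    exact mul_ne_zero (mul_ne_zero hm0 hp.ne_zero) (pow_ne_zero _ hN)) h4
  rw [padicValNat.mul (mul_ne_zero hm0 hp.ne_zero) (pow_ne_zero _ hN),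
    padicValNat.mul hm0 hp.ne_zero, padicValNat.pow, padicValNat_self,
    padicValNat.eq_zero_of_not_dvd (fun h => by
      have := Nat.Coprime.eq_one_of_dvd hm.symm h
      exact hp.one_lt.ne' this)] at h2
  rw [Nat.even_iff] at h2
  omega

theorem core_sq (p : ℕ) (hp : p.Prime) (D : ℤ) (hD : D = p ∨ D = 2 * p) (A B z : ℤ)
    (hA : A ≠ 0) (hAB : A * B = D * z ^ 2) (hdiff : A - B ∣ 4) :
    ∃ e s : ℕ, (e = 1 ∨ e = 2 ∨ e = p ∨ e = 2 * p) ∧ A.natAbs = e * s ^ 2 := by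
  obtain ⟨e, s, hes, hsq⟩ := Nat.sq_mul_squarefree A.natAbs
  have hA' : A.natAbs ≠ 0 := by simpa using hA
  have he0 : e ≠ 0 := hsq.ne_zero
  have hs0 : s ≠ 0 := by
    rintro rfl
    simp at hes
    exact hA' hes.symm
  have hprime : ∀ q : ℕ, q.Prime → q ∣ e → q = 2 ∨ q = p := by
    intro q hq hqe
    by_contra hcon
    push Not at hcon
    have := Fact.mk hq
    have hqB : q ∣ B.natAbs := by
      by_contra hB
      have hB0 : B.natAbs ≠ 0 := by
        intro h
        rw [h] at hB
        exact hB (dvd_zero _)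
      have hABn : A.natAbs * B.natAbs = D.natAbs * z.natAbs ^ 2 := by
        rw [← Int.natAbs_mul, hAB, Int.natAbs_mul, Int.natAbs_pow]
      have hz0 : z.natAbs ≠ 0 := by
        intro h
        rw [h] at hABn
        simp at hABn
        rcases hABn with h | h
        · exact hA h
        · exact hB0 (by simpa using h)
      have hDq : ¬ q ∣ D.natAbs := by
        have h2 : ¬ q ∣ 2 := fun h => hcon.1 ((Nat.prime_dvd_prime_iff_eq hq Nat.prime_two).1 h)
        have h3 : ¬ q ∣ p := fun h => hcon.2 ((Nat.prime_dvd_prime_iff_eq hq hp).1 h)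
        rcases hD with rfl | rfl
        · simpa using h3
        · rw [Int.natAbs_mul]
          intro h
          rcases (hq.dvd_mul).1 h with h | h
          · exact h2 h
          · exact h3 (by simpa using h)
      have hD0 : D.natAbs ≠ 0 := by
        intro h
        rw [h] at hDq
        exact hDq (dvd_zero _)
      have hv := congrArg (padicValNat q) hABn
      rw [padicValNat.mul hA' hB0, padicValNat.mul hD0 (pow_ne_zero _ hz0),
        padicValNat.pow, padicValNat.eq_zero_of_not_dvd hB,
        padicValNat.eq_zero_of_not_dvd hDq, ← hes, padicValNat.mul (pow_ne_zero _ hs0) he0,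
        padicValNat.pow] at hv
      have h1 : padicValNat q e = 1 := by
        apply le_antisymm
        · by_contra hlt
          push Not at hlt
          have : q ^ 2 ∣ e := (padicValNat_dvd_iff_le he0).2 hlt
          rw [sq] at this
          exact hq.one_lt.ne' (Nat.isUnit_iff.1 (hsq q this))
        · exact one_le_padicValNat_of_dvd he0 hqe
      omega
    have hqA : (q : ℤ) ∣ A := by
      rw [Int.natCast_dvd, ← hes]
      exact Dvd.dvd.mul_left hqe _
    have hqB' : (q : ℤ) ∣ B := Int.natCast_dvd.2 hqB
    have h4 : (q : ℤ) ∣ 4 := (dvd_sub hqA hqB').trans hdiff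
    have h4' : q ∣ 2 ^ 2 := by exact_mod_cast h4
    exact hcon.1 ((Nat.prime_dvd_prime_iff_eq hq Nat.prime_two).1 (hq.dvd_of_dvd_pow h4'))
  have hdvd : e ∣ 2 * p := by
    rw [← Nat.prod_primeFactors_of_squarefree hsq]
    refine (Finset.prod_dvd_prod_of_subset _ (2 * p).primeFactors _ ?_).trans
      (Nat.prod_primeFactors_dvd _)
    intro q hq
    rw [Nat.mem_primeFactors] at hq ⊢
    refine ⟨hq.1, ?_, by simp [hp.ne_zero]⟩
    rcases hprime q hq.1 hq.2.1 with rfl | rfl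
    · exact dvd_mul_right _ _
    · exact dvd_mul_left _ _
  refine ⟨e, s, ?_, by rw [← hes]; ring⟩
  obtain ⟨a, b, ha, hb, hab⟩ := Nat.dvd_mul.1 hdvd
  rcases (Nat.dvd_prime Nat.prime_two).1 ha with rfl | rfl <;>
  rcases (Nat.dvd_prime hp).1 hb with rfl | rfl <;> omega

/-- Version with both factors, for positive `A`. -/
theorem core_sq' (p : ℕ) (hp : p.Prime) (hp2 : p ≠ 2) (D : ℤ) (hD : D = p ∨ D = 2 * p) (A B z : ℤ)
    (hA : 0 < A) (hAB : A * B = D * z ^ 2) (hdiff : A - B ∣ 4) :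
    ∃ e s t : ℤ, (e = 1 ∨ e = 2 ∨ e = p ∨ e = 2 * p) ∧ A = e * s ^ 2 ∧ e * B = D * t ^ 2 := by
  obtain ⟨e, s, he, hAs⟩ := core_sq p hp D hD A B z hA.ne' hAB hdiff
  have hA2 : A = e * (s : ℤ) ^ 2 := by
    have : A = (A.natAbs : ℤ) := by omega
    rw [this, hAs]; push_cast; ring
  have hs0 : (s : ℤ) ≠ 0 := by
    intro h
    rw [h] at hA2
    simp at hA2
    omega
  have hDsq : Squarefree D := by
    have h1 : Squarefree (p : ℤ) := (Nat.prime_iff_prime_int.1 hp).irreducible.squarefree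
    rcases hD with rfl | rfl
    · exact h1
    · have : Squarefree (2 * p : ℕ) := by
        rw [Nat.squarefree_mul ((Nat.coprime_primes Nat.prime_two hp).2 (Ne.symm hp2))]
        exact ⟨Nat.prime_two.prime.irreducible.squarefree, hp.prime.irreducible.squarefree⟩
      have h2 := Int.squarefree_natCast.2 this
      exact_mod_cast h2
  have hsz : (s : ℤ) ∣ z := by
    have hdv : (s : ℤ) ^ 2 ∣ D * z ^ 2 := by
      rw [← hAB, hA2]
      exact ⟨e * B, by ring⟩
    obtain ⟨n, hn⟩ := hdv
    have h1 : (s : ℤ) ^ 2 ∣ (D * z) ^ 2 := ⟨D * n, by linear_combination D * hn⟩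
    obtain ⟨m, hm⟩ := (Int.pow_dvd_pow_iff two_ne_zero).1 h1
    have h2 : D * n = m ^ 2 := by
      apply mul_left_cancel₀ (pow_ne_zero 2 hs0)
      linear_combination (D * z + s * m) * hm - D * hn
    have h3 : D ∣ m :=
      (hDsq.dvd_pow_iff_dvd two_ne_zero).1 ⟨n, h2.symm⟩
    obtain ⟨t, rfl⟩ := h3
    exact ⟨t, mul_left_cancel₀ hDsq.ne_zero (by linear_combination hm)⟩
  obtain ⟨t, rfl⟩ := hsz
  refine ⟨e, s, t, ?_, hA2, ?_⟩
  · rcases he with rfl | rfl | rfl | rfl <;> simp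
  · apply mul_left_cancel₀ (pow_ne_zero 2 hs0)
    rw [hA2] at hAB
    linear_combination hAB

theorem neg_one_not_sq (p : ℕ) (hp : p.Prime) (h8 : p % 8 = 7) (t m : ℤ)
    (h : t ^ 2 + 1 = p * m) : False := by
  have := Fact.mk hp
  have h1 : IsSquare (-1 : ZMod p) := ⟨(t : ZMod p), by
    have := congrArg (Int.cast : ℤ → ZMod p) h
    push_cast at this
    rw [ZMod.natCast_self] at this
    linear_combination -this⟩
  have := ZMod.exists_sq_eq_neg_one_iff.1 h1
  omega

theorem neg_two_not_sq (p : ℕ) (hp : p.Prime) (h8 : p % 8 = 7) (t m : ℤ)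
    (h : t ^ 2 + 2 = p * m) : False := by
  have := Fact.mk hp
  have h1 : IsSquare (-2 : ZMod p) := ⟨(t : ZMod p), by
    have := congrArg (Int.cast : ℤ → ZMod p) h
    push_cast at this
    rw [ZMod.natCast_self] at this
    linear_combination -this⟩
  have := (ZMod.exists_sq_eq_neg_two_iff (by rintro rfl; omega)).1 h1
  omega

theorem pell_smaller {D : ℤ} {a : Pell.Solution₁ D} (ha : Pell.IsFundamental a) (s t : ℤ)
    (hs : a.x + 1 = 2 * s ^ 2) (hst : s ^ 2 - D * t ^ 2 = 1) : False := by
  have h1 := ha.1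
  have hst' : |s| ^ 2 - D * t ^ 2 = 1 := by rwa [sq_abs]
  rw [← sq_abs] at hs
  have h0 := abs_nonneg s
  have h2 : 1 < |s| := by nlinarith
  have := ha.x_le_x (a := Pell.Solution₁.mk |s| t hst') (by simpa using h2)
  simp at this
  nlinarith

theorem exists_two (p : ℕ) (hp : p.Prime) (h8 : p % 8 = 7) :
    ∃ x y : ℤ, x ^ 2 - p * y ^ 2 = 2 := by
  have hns : ¬ IsSquare (p : ℤ) := (Nat.prime_iff_prime_int.1 hp).irreducible.not_isSquare
  obtain ⟨a, ha⟩ := Pell.IsFundamental.exists_of_not_isSquare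
    (by exact_mod_cast hp.pos : (0 : ℤ) < p) hns
  have hpr := a.prop
  have hx := ha.1
  obtain ⟨e, s, t, he, hA, hB⟩ := core_sq' p hp (by rintro rfl; omega) p (Or.inl rfl) (a.x + 1)
    (a.x - 1) a.y (by linarith) (by linear_combination hpr) (by norm_num)
  have hp0 : (p : ℤ) ≠ 0 := by exact_mod_cast hp.ne_zero
  rcases he with rfl | rfl | rfl | rfl
  · exact ⟨s, t, by linarith⟩
  · exfalso
    have ht : Even (t ^ 2) := by
      have : Even ((p : ℤ) * t ^ 2) := ⟨a.x - 1, by linarith⟩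
      rcases Int.even_mul.1 this with h | h
      · rw [Int.even_iff] at h; omega
      · exact h
    rw [Int.even_pow] at ht
    obtain ⟨t', rfl⟩ := ht.1
    exact pell_smaller ha s t' hA (by linarith)
  · exfalso
    have := mul_left_cancel₀ hp0 hB
    exact neg_two_not_sq p hp h8 t (s ^ 2) (by linarith)
  · exfalso
    have h2 : 2 * (a.x - 1) = t ^ 2 := mul_left_cancel₀ hp0 (by linear_combination hB)
    have ht : Even (t ^ 2) := ⟨a.x - 1, by linarith⟩
    rw [Int.even_pow] at ht
    obtain ⟨t', rfl⟩ := ht.1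
    exact neg_one_not_sq p hp h8 t' (s ^ 2) (by linarith)

theorem exists_one (p : ℕ) (hp : p.Prime) (h8 : p % 8 = 7) :
    ∃ u v : ℤ, 2 * u ^ 2 - p * v ^ 2 = 1 := by
  have hp2 : p ≠ 2 := by rintro rfl; omega
  have hns : ¬ IsSquare (2 * p : ℤ) := by
    rintro ⟨r, hr⟩
    have h2 : Even (r * r) := ⟨p, by linarith⟩
    rw [Int.even_mul, or_self] at h2
    obtain ⟨r', rfl⟩ := h2
    have : (p : ℤ) = 2 * (r' * r') := by linarith
    omega
  obtain ⟨a, ha⟩ := Pell.IsFundamental.exists_of_not_isSquare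
    (by have := hp.pos; positivity : (0 : ℤ) < 2 * p) hns
  have hpr := a.prop
  have hx := ha.1
  obtain ⟨e, s, t, he, hA, hB⟩ := core_sq' p hp hp2 (2 * p) (Or.inr rfl) (a.x + 1)
    (a.x - 1) a.y (by linarith) (by linear_combination hpr) (by norm_num)
  have hp0 : (p : ℤ) ≠ 0 := by exact_mod_cast hp.ne_zero
  rcases he with rfl | rfl | rfl | rfl
  · have hs : Even (s ^ 2) := ⟨p * t ^ 2 + 1, by linarith⟩
    rw [Int.even_pow] at hs
    obtain ⟨s', rfl⟩ := hs.1
    exact ⟨s', t, by linarith⟩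
  · exfalso
    have ht : Even (t ^ 2) := by
      have : Even ((p : ℤ) * t ^ 2) := ⟨s ^ 2 - 1, by linarith⟩
      rcases Int.even_mul.1 this with h | h
      · rw [Int.even_iff] at h; omega
      · exact h
    rw [Int.even_pow] at ht
    obtain ⟨t', rfl⟩ := ht.1
    exact pell_smaller ha s t' hA (by linarith)
  · exfalso
    have h2 : (a.x - 1) = 2 * t ^ 2 := mul_left_cancel₀ hp0 (by linear_combination hB)
    have hs : Even (s ^ 2) := by
      have : Even ((p : ℤ) * s ^ 2) := ⟨t ^ 2 + 1, by linarith⟩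
      rcases Int.even_mul.1 this with h | h
      · rw [Int.even_iff] at h; omega
      · exact h
    rw [Int.even_pow] at hs
    obtain ⟨s', rfl⟩ := hs.1
    exact neg_one_not_sq p hp h8 t (2 * s' ^ 2) (by linarith)
  · exfalso
    have h2 : a.x - 1 = t ^ 2 := by
      apply mul_left_cancel₀ (mul_ne_zero two_ne_zero hp0)
      linear_combination hB
    exact neg_two_not_sq p hp h8 t (2 * s ^ 2) (by linarith)

end Arith

section Quad

theorem exists_prime_mem {R : Type*} [CommRing R] (P : Ideal R) (hP : P.IsPrime) (n : ℕ)
    (hn : n ≠ 0) (h : (n : R) ∈ P) : ∃ q : ℕ, q.Prime ∧ q ∣ n ∧ (q : R) ∈ P := by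
  induction n using Nat.strong_induction_on with
  | _ n ih =>
    by_cases h1 : n = 1
    · subst h1
      exact absurd (P.eq_top_iff_one.2 (by simpa using h)) hP.ne_top
    · obtain ⟨q, hq, m, rfl⟩ := Nat.exists_prime_and_dvd h1
      push_cast at h
      rcases hP.mem_or_mem h with h | h
      · exact ⟨q, hq, dvd_mul_right _ _, h⟩
      · have hm : m ≠ 0 := fun h => hn (by simp [h])
        obtain ⟨q', h1, h2, h3⟩ := ih m (lt_mul_of_one_lt_left (Nat.pos_of_ne_zero hm) hq.one_lt)
          hm h
        exact ⟨q', h1, h2.mul_left _, h3⟩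

theorem prime_principal {K : Type*} [Field K] [NumberField K] (P : Ideal (𝓞 K)) (hP : P.IsPrime)
    (q : ℕ) (hq : q.Prime) (hqP : (q : 𝓞 K) ∈ P) (τ w : 𝓞 K) (hw : IsUnit w)
    (h : τ ^ Module.finrank ℚ K = q * w) : P.IsPrincipal := by
  have hτP : τ ∈ P := hP.mem_of_pow_mem _ (h ▸ P.mul_mem_right w hqP)
  have hfr : Module.finrank ℤ (𝓞 K) = Module.finrank ℚ K := RingOfIntegers.rank K
  have hn : Ideal.absNorm (Ideal.span {τ}) = q := by
    have h1 := congrArg (fun x => Ideal.absNorm (Ideal.span {x})) h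
    simp only [← Ideal.span_singleton_pow, map_pow, ← Ideal.span_singleton_mul_span_singleton,
      map_mul] at h1
    rw [Ideal.span_singleton_eq_top.2 hw, Ideal.absNorm_top, mul_one,
      Ideal.absNorm_span_singleton (q : 𝓞 K)] at h1
    have h2 : Algebra.norm ℤ (q : 𝓞 K) = (q : ℤ) ^ Module.finrank ℚ K := by
      rw [← hfr, ← Algebra.norm_algebraMap (R := ℤ)]; simp
    rw [h2, Int.natAbs_pow, Int.natAbs_natCast] at h1
    exact Nat.pow_left_injective Module.finrank_pos.ne' h1
  have hpr : (Ideal.span {τ}).IsPrime := Ideal.isPrime_of_irreducible_absNorm (by rw [hn]; exact hq)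
  have hne : Ideal.span {τ} ≠ ⊥ := by
    intro h0
    rw [h0, Ideal.absNorm_bot] at hn
    exact hq.ne_zero hn.symm
  have hmax := hpr.isMaximal hne
  have := hmax.eq_of_le hP.ne_top ((Ideal.span_singleton_le_iff_mem _).2 hτP)
  rw [← this]
  exact ⟨⟨τ, rfl⟩⟩

theorem finrank_two_of_gen {k K : Type*} [Field k] [Field K] [Algebra k K] (r : K) (d : k)
    (hr : r ^ 2 = algebraMap k K d) (hnr : r ∉ (algebraMap k K).range)
    (htop : k⟮r⟯ = ⊤) : Module.finrank k K = 2 := by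
  have hroot : Polynomial.aeval r (Polynomial.X ^ 2 - Polynomial.C d) = 0 := by simp [hr]
  have hmon : (Polynomial.X ^ 2 - Polynomial.C d).Monic := Polynomial.monic_X_pow_sub_C d two_ne_zero
  have hint : IsIntegral k r := ⟨_, hmon, hroot⟩
  rw [← IntermediateField.finrank_top', ← htop, IntermediateField.adjoin.finrank hint]
  apply le_antisymm
  · have := Polynomial.natDegree_le_of_dvd (minpoly.dvd k r hroot) hmon.ne_zero
    rwa [Polynomial.natDegree_X_pow_sub_C] at this
  · exact (minpoly.two_le_natDegree_iff hint).2 hnr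

section
variable {k K : Type*} [Field k] [NumberField k] [Field K] [NumberField K] [Algebra k K]
  [Algebra.IsQuadraticExtension k K]

theorem exists_gal_neg (r : K) (d : k)
    (hr : r ^ 2 = algebraMap k K d) (hnr : r ∉ (algebraMap k K).range) :
    ∃ σ : Gal(K/k), σ r = -r := by
  by_contra hcon
  push Not at hcon
  apply hnr
  have : ∀ σ : Gal(K/k), σ r = r := by
    intro σ
    have h1 : (σ r) ^ 2 = r ^ 2 := by rw [← map_pow, hr, σ.commutes]
    rcases sq_eq_sq_iff_eq_or_eq_neg.1 h1 with h | h
    · exact h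
    · exact absurd h (hcon σ)
  exact (IsGalois.mem_range_algebraMap_iff_fixed r).2 this

theorem quad_decomp (σ : Gal(K/k)) (r : K) (d : k) (hr0 : r ≠ 0)
    (hr : r ^ 2 = algebraMap k K d) (hσ : σ r = -r) (a : K) :
    ∃ x y : k, a = algebraMap k K x + algebraMap k K y * r := by
  have hσ1 : σ ≠ 1 := by
    rintro rfl
    have : r = -r := hσ
    exact hr0 (self_eq_neg.1 this)
  have hσσ : ∀ b, σ (σ b) = b := fun b => by
    have := gal_smul_smul σ hσ1
    exact DFunLike.congr_fun this b
  have hfix : ∀ b, σ b = b → ∃ x : k, algebraMap k K x = b := by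
    intro b hb
    refine (IsGalois.mem_range_algebraMap_iff_fixed b).2 fun g => ?_
    rcases gal_eq_one_or σ hσ1 g with rfl | rfl
    · rfl
    · exact hb
  obtain ⟨x, hx⟩ := hfix ((a + σ a) / 2) (by simp [map_div₀, hσσ, add_comm, map_ofNat])
  obtain ⟨y, hy⟩ := hfix ((a - σ a) / (2 * r)) (by
    simp only [map_div₀, map_sub, map_mul, hσσ, hσ, map_ofNat]
    field_simp
    ring)
  refine ⟨x, y, ?_⟩
  rw [hx, hy]
  field_simp
  ring

end

theorem rat_unit (u : (𝓞 ℚ)ˣ) : ((u : 𝓞 ℚ) : ℚ) = 1 ∨ ((u : 𝓞 ℚ) : ℚ) = -1 := by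
  have h : IsUnit (Rat.ringOfIntegersEquiv (u : 𝓞 ℚ)) := u.isUnit.map _
  have h2 : ((Rat.ringOfIntegersEquiv (u : 𝓞 ℚ) : ℤ) : ℚ) = ((u : 𝓞 ℚ) : ℚ) := by
    exact Rat.ringOfIntegersEquiv_apply_coe _
  rw [← h2]
  rcases Int.isUnit_iff.1 h with h | h <;> rw [h] <;> simp

theorem odd_quad_rat {K : Type*} [Field K] [NumberField K] [Algebra.IsQuadraticExtension ℚ K]
    (d : ℤ) (r : K) (hr : r ^ 2 = d) (hd : ∀ q : ℚ, q ^ 2 ≠ d)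
    (hram : ∀ q : ℕ, q.Prime → q ∣ (2 * d).natAbs → ∃ a b s t : ℤ,
      a ^ 2 + d * b ^ 2 = q * s ∧ 2 * (a * b) = q * t ∧ s ^ 2 - d * t ^ 2 = 1)
    (hm : (∃ a b : ℤ, a ^ 2 - d * b ^ 2 = -1) ∨ ∀ x y : ℚ, x ^ 2 - d * y ^ 2 ≠ -1) :
    Odd (classNumber K) := by
  have hd0 : d ≠ 0 := by
    rintro rfl
    exact hd 0 (by simp)
  have hr' : r ^ 2 = algebraMap ℚ K d := by simpa using hr
  have hr0 : r ≠ 0 := by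
    rintro rfl
    simp at hr
    exact hd0 (by exact_mod_cast hr.symm)
  have hnr : r ∉ (algebraMap ℚ K).range := by
    rintro ⟨q, rfl⟩
    rw [← map_pow] at hr'
    exact hd q ((algebraMap ℚ K).injective hr')
  obtain ⟨σ, hσ⟩ := exists_gal_neg r (d : ℚ) hr' hnr
  have hint : IsIntegral ℤ r := IsIntegral.of_pow two_pos (by rw [hr]; exact isIntegral_algebraMap)
  set δ : 𝓞 K := ⟨r, hint⟩ with hδ
  have hδr : (δ : K) = r := rfl
  have hδ2 : δ ^ 2 = (d : 𝓞 K) := by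
    apply RingOfIntegers.ext
    simp [hδr, hr]
  refine odd_classNumber_of_quadratic (k := ℚ) σ δ ?_ ?_ ?_ ?_ ?_
  · intro h
    exact hr0 (by rw [← hδr, h]; rfl)
  · apply RingOfIntegers.ext
    exact hσ
  · rw [Rat.classNumber_eq]; exact odd_one
  · intro P hP hPb h2
    have h3 : (((2 * d).natAbs : ℕ) : 𝓞 K) ∈ P := by
      have h4 : ((2 * d : ℤ) : 𝓞 K) ∈ P := by
        have := P.mul_mem_right δ h2
        rw [mul_assoc, ← sq, hδ2] at this
        exact_mod_cast this
      rcases Int.natAbs_eq (2 * d) with h | h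
      · rw [h, Int.cast_natCast] at h4; exact h4
      · rw [h, Int.cast_neg, Int.cast_natCast] at h4
        exact (P.neg_mem_iff).1 h4
    obtain ⟨q, hq, hqd, hqP⟩ := exists_prime_mem P hP _ (by simp [hd0]) h3
    obtain ⟨a, b, s, t, h1, h2, h3⟩ := hram q hq hqd
    refine prime_principal P hP q hq hqP (a + b * δ) (s + t * δ) ?_ ?_
    · refine IsUnit.of_mul_eq_one (s - t * δ) ?_
      have : ((s ^ 2 - d * t ^ 2 : ℤ) : 𝓞 K) = (1 : ℤ) := by rw [h3]
      push_cast at this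
      linear_combination this - (t : 𝓞 K) ^ 2 * hδ2
    · rw [Algebra.IsQuadraticExtension.finrank_eq_two]
      have e1 : ((a ^ 2 + d * b ^ 2 : ℤ) : 𝓞 K) = (q * s : ℤ) := by rw [h1]
      have e2 : ((2 * (a * b) : ℤ) : 𝓞 K) = (q * t : ℤ) := by rw [h2]
      push_cast at e1 e2
      linear_combination e1 + δ * e2 + (b : 𝓞 K) ^ 2 * hδ2
  · intro u a ha
    rcases rat_unit u with hu | hu
    · exact ⟨1, by simp [hu]⟩
    · rcases hm with ⟨x, y, hxy⟩ | hm
      · have e1 : ((x ^ 2 - d * y ^ 2 : ℤ) : 𝓞 K) = (-1 : ℤ) := by rw [hxy]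
        push_cast at e1
        have hv : (x + y * δ) * -(x - y * δ) = 1 := by
          linear_combination -e1 + (y : 𝓞 K) ^ 2 * hδ2
        refine ⟨Units.mkOfMulEqOne _ _ hv, ?_⟩
        rw [hu]
        have e2 : ((x ^ 2 - d * y ^ 2 : ℤ) : K) = (-1 : ℤ) := by rw [hxy]
        push_cast at e2
        simp [hδr, hσ]
        linear_combination e2 - (y : K) ^ 2 * hr
      · exfalso
        obtain ⟨x, y, rfl⟩ := quad_decomp σ r (d : ℚ) hr0 hr' hσ a
        rw [hu] at ha
        apply hm x y
        apply (algebraMap ℚ K).injective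
        simp [hσ] at ha ⊢
        linear_combination ha + (y : K) ^ 2 * hr

theorem odd_two {K : Type*} [Field K] [NumberField K] [Algebra.IsQuadraticExtension ℚ K]
    (r : K) (hr : r ^ 2 = 2) (hd : ∀ q : ℚ, q ^ 2 ≠ 2) : Odd (classNumber K) := by
  refine odd_quad_rat 2 r (by simpa using hr) (by simpa using hd) ?_ (Or.inl ⟨1, 1, by norm_num⟩)
  intro q hq hq2
  have h4 : q ∣ 2 ^ 2 := by simpa using hq2
  obtain rfl := ((Nat.prime_dvd_prime_iff_eq hq Nat.prime_two).1 (hq.dvd_of_dvd_pow h4))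
  exact ⟨0, 1, 1, 0, by norm_num⟩

theorem odd_p {K : Type*} [Field K] [NumberField K] [Algebra.IsQuadraticExtension ℚ K]
    (p : ℕ) (hp : p.Prime) (h8 : p % 8 = 7)
    (r : K) (hr : r ^ 2 = p) (hd : ∀ q : ℚ, q ^ 2 ≠ p) : Odd (classNumber K) := by
  refine odd_quad_rat p r (by simpa using hr) (by simpa using hd) ?_ (Or.inr ?_)
  · intro q hq hq2
    rw [Int.natAbs_mul] at hq2
    rcases hq.dvd_mul.1 hq2 with h | h
    · obtain rfl := (Nat.prime_dvd_prime_iff_eq hq Nat.prime_two).1 h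
      obtain ⟨x, y, hxy⟩ := exists_two p hp h8
      refine ⟨x, y, 1 + p * y ^ 2, x * y, ?_, ?_, ?_⟩
      · push_cast; linear_combination hxy
      · push_cast; ring
      · linear_combination -p * y ^ 2 * hxy
    · obtain rfl := (Nat.prime_dvd_prime_iff_eq hq hp).1 h
      exact ⟨0, 1, 1, 0, by simp⟩
  · intro x y
    have := no_neg_one p hp (by omega) 1 (by simp) one_ne_zero x y
    simpa using this

theorem odd_2p {K : Type*} [Field K] [NumberField K] [Algebra.IsQuadraticExtension ℚ K]
    (p : ℕ) (hp : p.Prime) (h8 : p % 8 = 7)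
    (r : K) (hr : r ^ 2 = 2 * p) (hd : ∀ q : ℚ, q ^ 2 ≠ 2 * p) : Odd (classNumber K) := by
  obtain ⟨u, v, huv⟩ := exists_one p hp h8
  refine odd_quad_rat (2 * p) r (by simpa using hr) (by simpa using hd) ?_ (Or.inr ?_)
  · intro q hq hq2
    rw [Int.natAbs_mul, Int.natAbs_mul, ← mul_assoc] at hq2
    rcases hq.dvd_mul.1 hq2 with h | h
    · have h4 : q ∣ 2 ^ 2 := by simpa using h
      obtain rfl := ((Nat.prime_dvd_prime_iff_eq hq Nat.prime_two).1 (hq.dvd_of_dvd_pow h4))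
      refine ⟨2 * u, v, 2 * u ^ 2 + p * v ^ 2, 2 * u * v, ?_, ?_, ?_⟩
      · push_cast; ring
      · push_cast; ring
      · linear_combination (2 * u ^ 2 - p * v ^ 2 + 1) * huv
    · obtain rfl := (Nat.prime_dvd_prime_iff_eq hq hp).1 h
      refine ⟨q * v, u, 2 * u ^ 2 + q * v ^ 2, 2 * u * v, ?_, ?_, ?_⟩
      · ring
      · ring
      · linear_combination (2 * u ^ 2 - q * v ^ 2 + 1) * huv
  · intro x y
    have := no_neg_one p hp (by omega) 2
      ((Nat.coprime_primes Nat.prime_two hp).2 (by rintro rfl; omega)) two_ne_zero x y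
    simpa using this

end Quad

section Beta

theorem zsqrt2_norm_ne (a : ℤ√2) (ha : a ≠ 0) : a.norm ≠ 0 := by
  intro h
  apply ha
  have h2 : ¬ IsSquare (2 : ℤ) := (Int.prime_two).irreducible.not_isSquare
  rw [Zsqrtd.norm_def] at h
  by_cases hi : a.im = 0
  · rw [hi] at h
    ext
    · simpa using h
    · simpa using hi
  · exfalso
    have h3 : a.im ^ 2 ∣ a.re ^ 2 := ⟨2, by linarith⟩
    obtain ⟨c, hc⟩ := (Int.pow_dvd_pow_iff two_ne_zero).1 h3
    apply h2
    refine ⟨c, mul_left_cancel₀ (pow_ne_zero 2 hi) ?_⟩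
    rw [hc] at h
    linear_combination -h

theorem zsqrt2_domain : IsDomain (ℤ√2) := by
  have : NoZeroDivisors (ℤ√2) := ⟨by
    intro a b h
    by_contra hcon
    push Not at hcon
    have h1 := congrArg Zsqrtd.norm h
    rw [Zsqrtd.norm_mul, Zsqrtd.norm_zero] at h1
    rcases mul_eq_zero.1 h1 with h | h
    · exact zsqrt2_norm_ne a hcon.1 h
    · exact zsqrt2_norm_ne b hcon.2 h⟩
  have : Nontrivial (ℤ√2) := ⟨0, 1, by decide⟩
  exact NoZeroDivisors.to_isDomain _

theorem zsqrt2_div (a b : ℤ√2) (hb : b ≠ 0) :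
    ∃ q : ℤ√2, (a - b * q).norm.natAbs < b.norm.natAbs := by
  have hN := zsqrt2_norm_ne b hb
  set n := b.norm with hn
  set c := a * star b with hc
  have hnQ : (n : ℚ) ≠ 0 := by exact_mod_cast hN
  set X := round ((c.re : ℚ) / n)
  set Y := round ((c.im : ℚ) / n)
  have hX := abs_sub_round ((c.re : ℚ) / n)
  have hY := abs_sub_round ((c.im : ℚ) / n)
  refine ⟨⟨X, Y⟩, ?_⟩
  set ρ := a - b * ⟨X, Y⟩ with hρ
  have h1 : ρ * star b = c - (n : ℤ√2) * ⟨X, Y⟩ := by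
    rw [hρ, hn, Zsqrtd.norm_eq_mul_conj]
    ring
  have h2 : ρ.norm * n = (c.re - n * X) ^ 2 - 2 * (c.im - n * Y) ^ 2 := by
    have := congrArg Zsqrtd.norm h1
    rw [Zsqrtd.norm_mul, Zsqrtd.norm_conj, ← hn] at this
    rw [this, Zsqrtd.norm_def]
    simp
    ring
  have h3 : ((ρ.norm : ℚ)) = n * (((c.re : ℚ) / n - X) ^ 2 - 2 * ((c.im : ℚ) / n - Y) ^ 2) := by
    have : ((ρ.norm * n : ℤ) : ℚ) = ((c.re - n * X) ^ 2 - 2 * (c.im - n * Y) ^ 2 : ℤ) := by rw [h2]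
    push_cast at this
    field_simp
    linear_combination this
  have h4 : |((c.re : ℚ) / n - X) ^ 2 - 2 * ((c.im : ℚ) / n - Y) ^ 2| < 1 := by
    have e1 := sq_le_sq' (abs_le.1 hX).1 (abs_le.1 hX).2
    have e2 := sq_le_sq' (abs_le.1 hY).1 (abs_le.1 hY).2
    have e3 := sq_nonneg ((c.re : ℚ) / n - X)
    have e4 := sq_nonneg ((c.im : ℚ) / n - Y)
    rw [abs_lt]
    constructor <;> linarith
  have h5 : |(ρ.norm : ℚ)| < |(n : ℚ)| := by
    rw [h3, abs_mul]
    have := abs_pos.2 hnQ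
    nlinarith
  have h6 : |ρ.norm| < |n| := by exact_mod_cast h5
  rw [Int.abs_eq_natAbs, Int.abs_eq_natAbs] at h6
  exact_mod_cast h6

theorem zsqrt2_pid : IsPrincipalIdealRing (ℤ√2) := by
  classical
  have := zsqrt2_domain
  choose! f hf using zsqrt2_div
  let _ : EuclideanDomain (ℤ√2) :=
    { (inferInstance : CommRing (ℤ√2)), (inferInstance : Nontrivial (ℤ√2)) with
      quotient := fun a b => if b = 0 then 0 else f a b
      quotient_zero := fun a => by simp
      remainder := fun a b => a - b * (if b = 0 then 0 else f a b)
      quotient_mul_add_remainder_eq := fun a b => by ring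
      r := fun a b => a.norm.natAbs < b.norm.natAbs
      r_wellFounded := (measure fun a : ℤ√2 => a.norm.natAbs).wf
      remainder_lt := fun a b hb => by
        simp only [hb, if_false]
        exact hf a b hb
      mul_left_not_lt := fun a b hb => by
        rw [Zsqrtd.norm_mul, Int.natAbs_mul, not_lt]
        exact Nat.le_mul_of_pos_right _ (Int.natAbs_pos.2 (zsqrt2_norm_ne b hb)) }
  exact EuclideanDomain.to_principal_ideal_domain

theorem zsqrt2_pi (p : ℕ) (hp : p.Prime) (x y : ℤ) (hxy : x ^ 2 - p * y ^ 2 = 2) :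
    ∃ (π : ℤ√2) (ε : ℤ), (ε = 1 ∨ ε = -1) ∧ π * star π = (ε : ℤ√2) * p ∧ Prime π := by
  have := zsqrt2_domain
  have := zsqrt2_pid
  have hnp : ¬ Prime ((p : ℤ) : ℤ√2) := by
    intro h
    have h1 : ((p : ℤ) : ℤ√2) ∣ ⟨x, 1⟩ * ⟨x, -1⟩ := ⟨((y * y : ℤ) : ℤ√2), by
      ext
      · simp; linarith
      · simp⟩
    rcases h.dvd_or_dvd h1 with h | h
    all_goals
      rw [Zsqrtd.intCast_dvd] at h
      have h2 := h.2
      simp at h2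
      have := Int.isUnit_iff.1 (isUnit_of_dvd_one h2)
      have := hp.one_lt
      omega
  have hpn : ((p : ℤ) : ℤ√2).norm = p * p := Zsqrtd.norm_intCast _
  have hnu : ¬ IsUnit ((p : ℤ) : ℤ√2) := by
    rw [← Zsqrtd.norm_eq_one_iff, hpn, Int.natAbs_mul]
    simp
    exact hp.one_lt.ne'
  rw [← irreducible_iff_prime, irreducible_iff] at hnp
  push Not at hnp
  obtain ⟨a, b, hab, ha, hb⟩ := hnp hnu
  have hN := congrArg (fun z => z.norm.natAbs) hab
  simp only [hpn, Zsqrtd.norm_mul, Int.natAbs_mul, Int.natAbs_natCast] at hN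
  rw [← Zsqrtd.norm_eq_one_iff] at ha hb
  have hap : a.norm.natAbs = p := by
    exact ((Nat.Prime.mul_eq_prime_sq_iff hp ha hb).1 (by rw [← hN, sq])).1
  refine ⟨a, a.norm.sign, ?_, ?_, ?_⟩
  · have : a.norm ≠ 0 := by
      intro h; rw [h] at hap; exact hp.ne_zero (by simpa using hap.symm)
    rcases lt_trichotomy a.norm 0 with h | h | h
    · right; exact Int.sign_eq_neg_one_of_neg h
    · exact absurd h this
    · left; exact Int.sign_eq_one_of_pos h
  · rw [← Zsqrtd.norm_eq_mul_conj]
    have : a.norm = a.norm.sign * p := by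
      conv_lhs => rw [← Int.sign_mul_natAbs a.norm, hap]
    conv_lhs => rw [this]
    push_cast
    rfl
  · rw [← irreducible_iff_prime, irreducible_iff]
    constructor
    · rwa [← Zsqrtd.norm_eq_one_iff]
    · intro c e hce
      have h1 := congrArg (fun z => z.norm.natAbs) hce
      simp only [Zsqrtd.norm_mul, Int.natAbs_mul, hap] at h1
      rw [← Zsqrtd.norm_eq_one_iff, ← Zsqrtd.norm_eq_one_iff]
      exact (Nat.dvd_prime hp).1 ⟨_, h1⟩ |>.elim Or.inl fun h => Or.inr (by
        rw [h] at h1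
        exact (Nat.mul_eq_left hp.ne_zero).1 h1.symm)

theorem zsqrt2_sq (p : ℕ) (hp : p.Prime) (π C : ℤ√2) (ε c y : ℤ) (hε : ε = 1 ∨ ε = -1)
    (hc : c = 1 ∨ c = -1) (hπ : π * star π = (ε : ℤ√2) * p) (hpr : Prime π)
    (hC : C * star C = (c : ℤ√2) * p * (y : ℤ√2) ^ 2) (hco : IsCoprime C (star C)) :
    ∃ w m : ℤ√2, IsUnit w ∧ (C = w * π * m ^ 2 ∨ C = w * star π * m ^ 2) := by
  have := zsqrt2_domain
  have := zsqrt2_pid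
  have hp0 : ((p : ℕ) : ℤ√2) ≠ 0 := by
    intro h
    have := congrArg Zsqrtd.re h
    simp at this
    exact hp.ne_zero this
  have hε2 : (ε : ℤ√2) * ε = 1 := by rcases hε with rfl | rfl <;> simp
  have hc2 : (c : ℤ√2) * c = 1 := by rcases hc with rfl | rfl <;> simp
  have key : ∀ ϖ : ℤ√2, ϖ * star ϖ = (ε : ℤ√2) * p → ϖ ∣ C →
      ∃ w m : ℤ√2, IsUnit w ∧ C = w * ϖ * m ^ 2 := by
    rintro ϖ hϖ ⟨C₁, rfl⟩
    rw [star_mul'] at hC hco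
    have h1 : C₁ * (c * ε * star C₁) = (y : ℤ√2) ^ 2 := by
      apply mul_left_cancel₀ hp0
      linear_combination (c : ℤ√2) * hC + (p : ℤ√2) * y ^ 2 * hc2 -
        c * C₁ * star C₁ * hϖ
    have h2 : IsCoprime C₁ (star C₁) := (IsCoprime.of_mul_left_right hco).of_mul_right_right
    have h3 : IsCoprime C₁ (c * ε * star C₁) := by
      obtain ⟨a, b, hab⟩ := h2
      exact ⟨a, b * (c * ε), by
        linear_combination hab + b * star C₁ * (ε * ε * hc2 + hε2)⟩
    obtain ⟨m, w, hw⟩ := exists_associated_pow_of_mul_eq_pow' h3 h1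
    exact ⟨w, m, w.isUnit, by rw [← hw]; ring⟩
  have hdiv : π ∣ C * star C := by
    rw [hC]
    exact ⟨star π * ε * c * y ^ 2, by
      linear_combination (-(ε : ℤ√2) * c * y ^ 2) * hπ - c * p * y ^ 2 * hε2⟩
  rcases hpr.dvd_or_dvd hdiv with h | h
  · obtain ⟨w, m, hw, h⟩ := key π hπ h
    exact ⟨w, m, hw, Or.inl h⟩
  · have h' : star π ∣ C := by
      obtain ⟨t, ht⟩ := h
      exact ⟨star t, by rw [← star_star C, ht, star_mul']⟩
    obtain ⟨w, m, hw, h⟩ := key (star π) (by rw [star_star, mul_comm, hπ]) h'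
    exact ⟨w, m, hw, Or.inr h⟩

theorem zsqrt2_AB (p : ℕ) (hp : p.Prime) (h8 : p % 8 = 7) (x y u v : ℤ)
    (hxy : x ^ 2 - p * y ^ 2 = 2) (huv : 2 * u ^ 2 - p * v ^ 2 = 1) :
    ∃ w m : ℤ√2, IsUnit w ∧ ((⟨x, 1⟩ * ⟨1, u⟩ : ℤ√2) = w * m ^ 2 ∨
      (⟨x, 1⟩ * ⟨1, u⟩ : ℤ√2) = w * p * m ^ 2) := by
  obtain ⟨π, ε, hε, hπ, hpr⟩ := zsqrt2_pi p hp x y hxy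
  have hεu : IsUnit (ε : ℤ√2) := by rcases hε with rfl | rfl <;> simp
  have hxodd : Odd x := by
    by_contra hx
    rw [Int.not_odd_iff_even] at hx
    obtain ⟨x', rfl⟩ := hx
    have hy : Even (p * y ^ 2) := ⟨2 * x' ^ 2 - 1, by linarith⟩
    rcases Int.even_mul.1 hy with h | h
    · rw [Int.even_iff] at h; omega
    · obtain ⟨y', rfl⟩ := (Int.even_pow.1 h).1
      have : 2 * (x' ^ 2 - p * y' ^ 2) = 1 := by linarith
      omega
  obtain ⟨j, hj⟩ : ∃ j, x ^ 2 = 8 * j + 1 := by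
    have := Int.sq_mod_four_eq_one_of_odd hxodd
    obtain ⟨i, rfl⟩ := hxodd
    obtain ⟨l, hl⟩ := Int.even_mul_succ_self i
    exact ⟨l, by linear_combination 4 * hl⟩
  obtain ⟨w₁, m₁, hw₁, h₁⟩ := zsqrt2_sq p hp π ⟨x, 1⟩ ε 1 y hε (Or.inl rfl) hπ hpr
    (by
      ext
      · simp [sq]; linarith
      · simp [sq])
    ⟨⟨-j * x - x, 3 * j + 1⟩, ⟨j * x, -j⟩, by
      ext
      · simp; linear_combination -hj
      · simp; ring⟩
  obtain ⟨w₂, m₂, hw₂, h₂⟩ := zsqrt2_sq p hp π ⟨1, u⟩ ε (-1) v hε (Or.inr rfl) hπ hpr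
    (by
      ext
      · simp [sq]; linarith
      · simp [sq])
    ⟨⟨1 + u ^ 2, -u⟩, ⟨u ^ 2, 0⟩, by
      ext
      · simp; ring
      · simp; ring⟩
  rcases h₁ with h₁ | h₁ <;> rcases h₂ with h₂ | h₂
  · exact ⟨w₁ * w₂, π * m₁ * m₂, hw₁.mul hw₂, Or.inl (by rw [h₁, h₂]; ring)⟩
  · exact ⟨w₁ * w₂ * ε, m₁ * m₂, (hw₁.mul hw₂).mul hεu, Or.inr (by
      rw [h₁, h₂]; linear_combination w₁ * w₂ * m₁ ^ 2 * m₂ ^ 2 * hπ)⟩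
  · exact ⟨w₁ * w₂ * ε, m₁ * m₂, (hw₁.mul hw₂).mul hεu, Or.inr (by
      rw [h₁, h₂]; linear_combination w₁ * w₂ * m₁ ^ 2 * m₂ ^ 2 * hπ)⟩
  · exact ⟨w₁ * w₂, star π * m₁ * m₂, hw₁.mul hw₂, Or.inl (by rw [h₁, h₂]; ring)⟩

theorem exists_beta {F : Type*} [Field F] [CharZero F] (p : ℕ) (hp : p.Prime) (h8 : p % 8 = 7)
    (r s : F) (hr : r ^ 2 = p) (hs : s ^ 2 = 2) :
    ∃ β ω ω' : F, IsIntegral ℤ β ∧ IsIntegral ℤ ω ∧ IsIntegral ℤ ω' ∧ ω * ω' = 1 ∧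
      β ^ 4 = 2 * ω := by
  obtain ⟨x, y, hxy⟩ := exists_two p hp h8
  obtain ⟨u, v, huv⟩ := exists_one p hp h8
  obtain ⟨w, m, hw, hwm⟩ := zsqrt2_AB p hp h8 x y u v hxy huv
  have hZ : ∀ n : ℤ, IsIntegral ℤ (n : F) := fun n => isIntegral_algebraMap
  have hN : ∀ n : ℕ, IsIntegral ℤ (n : F) := fun n => by exact_mod_cast hZ n
  have hsI : IsIntegral ℤ s := IsIntegral.of_pow two_pos (by rw [hs]; exact_mod_cast hZ 2)
  have hrI : IsIntegral ℤ r := IsIntegral.of_pow two_pos (by rw [hr]; exact hN p)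
  have hs0 : s ≠ 0 := by rintro rfl; norm_num at hs
  have hpF : (p : F) ≠ 0 := by exact_mod_cast hp.ne_zero
  have hr0 : r ≠ 0 := by
    rintro rfl
    exact hpF (by rw [← hr]; simp)
  let φ : ℤ√2 →+* F := Zsqrtd.lift ⟨s, by rw [← sq, hs]; norm_num⟩
  have hφ : ∀ a b : ℤ, φ ⟨a, b⟩ = a + b * s := fun a b => by simp [φ, Zsqrtd.lift]
  have hφI : ∀ z, IsIntegral ℤ (φ z) := fun z => by
    rw [show z = ⟨z.re, z.im⟩ from rfl, hφ]
    exact (hZ _).add ((hZ _).mul hsI)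
  have hφp : φ (p : ℤ√2) = p := map_natCast φ p
  obtain ⟨w, rfl⟩ := hw
  have hxyF : (x : F) ^ 2 - p * y ^ 2 = 2 := by exact_mod_cast congrArg (Int.cast : ℤ → F) hxy
  have huvF : 2 * (u : F) ^ 2 - p * v ^ 2 = 1 := by exact_mod_cast congrArg (Int.cast : ℤ → F) huv
  have hy0 : (y : F) ≠ 0 := by
    intro h
    have hy : y = 0 := by exact_mod_cast h
    subst hy
    have h1 : x ^ 2 = 2 := by linarith
    have h2 : IsSquare (2 : ℤ) := ⟨x, by rw [← h1, sq]⟩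
    exact (Int.prime_two).irreducible.not_isSquare h2
  have hv0 : (v : F) ≠ 0 := by
    intro h
    have hv : v = 0 := by exact_mod_cast h
    subst hv
    have : 2 * u ^ 2 = 1 := by linarith
    omega
  have hAB0 : ((x : F) + s) * (1 + u * s) ≠ 0 := by
    intro h
    have h1 : (p : F) * y ^ 2 * (p * v ^ 2) = 0 := by
      have e1 : ((x : F) + s) * (x - s) = p * y ^ 2 := by linear_combination hxyF - hs
      have e2 : (1 + (u : F) * s) * (u * s - 1) = p * v ^ 2 := by
        linear_combination huvF + (u : F) ^ 2 * hs
      rw [← e1, ← e2]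
      linear_combination ((x : F) - s) * (u * s - 1) * h
    rcases mul_eq_zero.1 h1 with h | h
    · exact mul_ne_zero hpF (pow_ne_zero 2 hy0) h
    · exact mul_ne_zero hpF (pow_ne_zero 2 hv0) h
  set η := (x + y * r) / s with hη
  set η' := (x - y * r) / s with hη'
  set θ := u * s + v * r with hθ
  set θ' := u * s - v * r with hθ'
  have hηη : η * η' = 1 := by
    rw [hη, hη']; field_simp
    linear_combination hxyF - (y : F) ^ 2 * hr - hs
  have hθθ : θ * θ' = 1 := by
    rw [hθ, hθ']
    linear_combination huvF - (v : F) ^ 2 * hr + (u : F) ^ 2 * hs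
  have hηI : IsIntegral ℤ η := by
    refine IsIntegral.of_pow two_pos ?_
    have : η ^ 2 = 1 + p * y ^ 2 + x * y * r := by
      rw [hη]; field_simp
      rw [hs]
      linear_combination hxyF + (y : F) ^ 2 * hr
    rw [this]
    exact ((isIntegral_one.add ((hN p).mul ((hZ y).pow 2))).add (((hZ x).mul (hZ y)).mul hrI))
  have hηI' : IsIntegral ℤ η' := by
    refine IsIntegral.of_pow two_pos ?_
    have : η' ^ 2 = 1 + p * y ^ 2 - x * y * r := by
      rw [hη']; field_simp
      rw [hs]
      linear_combination hxyF + (y : F) ^ 2 * hr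
    rw [this]
    exact ((isIntegral_one.add ((hN p).mul ((hZ y).pow 2))).sub (((hZ x).mul (hZ y)).mul hrI))
  have hθI : IsIntegral ℤ θ := ((hZ _).mul hsI).add ((hZ _).mul hrI)
  have hθI' : IsIntegral ℤ θ' := ((hZ _).mul hsI).sub ((hZ _).mul hrI)
  have hηs : η + η' = x * s := by
    rw [hη, hη']; field_simp; rw [hs]; ring
  have hθs : θ + θ' = 2 * u * s := by rw [hθ, hθ']; ring
  have hww : φ (w : ℤ√2) * φ ((w⁻¹ : (ℤ√2)ˣ) : ℤ√2) = 1 := by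
    rw [← map_mul]; simp
  have h1 : (1 + η) ^ 2 = η * (s * (x + s)) := by
    linear_combination η * hηs - hηη - η * hs
  have h2 : (1 + θ) ^ 2 = θ * (2 * (1 + u * s)) := by
    linear_combination θ * hθs - hθθ
  -- the square root
  obtain ⟨c, hc0, hc⟩ : ∃ c : F, c ≠ 0 ∧ ((x : F) + s) * (1 + u * s) = φ w * c ^ 2 := by
    have hφAB : φ (⟨x, 1⟩ * ⟨1, u⟩) = ((x : F) + s) * (1 + u * s) := by
      rw [map_mul, hφ, hφ]; push_cast; ring
    rcases hwm with h | h
    · have h3 := congrArg φ h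
      rw [hφAB, map_mul, map_pow] at h3
      refine ⟨φ m, ?_, h3⟩
      intro h0
      rw [h0] at h3
      exact hAB0 (by rw [h3]; simp)
    · have h3 := congrArg φ h
      rw [hφAB, map_mul, map_mul, hφp, map_pow] at h3
      refine ⟨r * φ m, ?_, by rw [h3, ← hr]; ring⟩
      intro h0
      rw [(mul_eq_zero.1 h0).resolve_left hr0] at h3
      exact hAB0 (by rw [h3]; simp)
  set ω₀ := η * θ * φ w with hω
  have hβ2 : ((1 + η) * (1 + θ) / (s * c)) ^ 2 = s * ω₀ := by
    rw [div_pow, mul_pow, h1, h2, div_eq_iff (pow_ne_zero 2 (mul_ne_zero hs0 hc0)), hω]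
    linear_combination 2 * s * η * θ * hc - s * η * θ * φ w * c ^ 2 * hs
  have hωI : IsIntegral ℤ ω₀ := (hηI.mul hθI).mul (hφI _)
  refine ⟨(1 + η) * (1 + θ) / (s * c), ω₀ ^ 2, (η' * θ' * φ ((w⁻¹ : (ℤ√2)ˣ) : ℤ√2)) ^ 2,
    IsIntegral.of_pow two_pos ?_, hωI.pow 2, ((hηI'.mul hθI').mul (hφI _)).pow 2, ?_, ?_⟩
  · rw [hβ2]; exact hsI.mul hωI
  · rw [← mul_pow]
    have : ω₀ * (η' * θ' * φ ((w⁻¹ : (ℤ√2)ˣ) : ℤ√2)) = (η * η') * (θ * θ') *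
      (φ w * φ ((w⁻¹ : (ℤ√2)ˣ) : ℤ√2)) := by rw [hω]; ring
    rw [this, hηη, hθθ, hww]; norm_num
  · rw [show (4 : ℕ) = 2 * 2 from rfl, pow_mul, hβ2]
    linear_combination ω₀ ^ 2 * hs

end Beta

section Biquad

theorem rat_int_of_integral {k : Type*} [Field k] [CharZero k] (q : ℚ)
    (h : IsIntegral ℤ (algebraMap ℚ k q)) : ∃ n : ℤ, q = n := by
  have h1 : IsIntegral ℤ q :=
    (isIntegral_algHom_iff (Algebra.ofId ℚ k |>.restrictScalars ℤ) (algebraMap ℚ k).injective).1 h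
  obtain ⟨n, hn⟩ := IsIntegrallyClosed.isIntegral_iff.1 h1
  exact ⟨n, by simpa using hn.symm⟩

theorem unit_sq {k : Type*} [Field k] [NumberField k] [Algebra.IsQuadraticExtension ℚ k]
    (p : ℕ) (hp : p.Prime) (h8 : p % 8 = 7)
    (r : k) (hr : r ^ 2 = p) (hd : ∀ q : ℚ, q ^ 2 ≠ p) (e : (𝓞 k)ˣ) :
    ∃ (f : k) (c : k), (c = 1 ∨ c = -1) ∧
      (((e : 𝓞 k) : k) = c * f ^ 2 ∨ 2 * ((e : 𝓞 k) : k) = c * f ^ 2) := by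
  have hr' : r ^ 2 = algebraMap ℚ k p := by simpa using hr
  have hp0 : (p : k) ≠ 0 := by exact_mod_cast hp.ne_zero
  have hr0 : r ≠ 0 := by
    rintro rfl
    exact hp0 (by rw [← hr]; simp)
  have hnr : r ∉ (algebraMap ℚ k).range := by
    rintro ⟨q, rfl⟩
    rw [← map_pow] at hr'
    exact hd q ((algebraMap ℚ k).injective hr')
  obtain ⟨ρ, hρ⟩ := exists_gal_neg r (p : ℚ) hr' hnr
  obtain ⟨x, y, hxy⟩ := quad_decomp ρ r (p : ℚ) hr0 hr' hρ ((e : 𝓞 k) : k)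
  obtain ⟨x', y', hxy'⟩ := quad_decomp ρ r (p : ℚ) hr0 hr' hρ (((e⁻¹ : (𝓞 k)ˣ) : 𝓞 k) : k)
  have hI : ∀ a : 𝓞 k, IsIntegral ℤ (a : k) := fun a => a.isIntegral_coe
  have hIρ : ∀ a : 𝓞 k, IsIntegral ℤ (ρ (a : k)) := fun a => (ρ • a).isIntegral_coe
  have hee : ((e : 𝓞 k) : k) * (((e⁻¹ : (𝓞 k)ˣ) : 𝓞 k) : k) = 1 := by
    rw [← map_mul]; simp
  set E := ((e : 𝓞 k) : k) with hE
  set E' := (((e⁻¹ : (𝓞 k)ˣ) : 𝓞 k) : k) with hE'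
  have hρE : ρ E = algebraMap ℚ k x - algebraMap ℚ k y * r := by
    rw [hxy, map_add, map_mul, ρ.commutes, ρ.commutes, hρ]; ring
  have hρE' : ρ E' = algebraMap ℚ k x' - algebraMap ℚ k y' * r := by
    rw [hxy', map_add, map_mul, ρ.commutes, ρ.commutes, hρ]; ring
  have hn : E * ρ E = algebraMap ℚ k (x ^ 2 - p * y ^ 2) := by
    rw [hρE, hxy]
    simp only [map_sub, map_mul, map_pow, map_natCast]
    linear_combination -(algebraMap ℚ k y) ^ 2 * hr
  have hn' : E' * ρ E' = algebraMap ℚ k (x' ^ 2 - p * y' ^ 2) := by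
    rw [hρE', hxy']
    simp only [map_sub, map_mul, map_pow, map_natCast]
    linear_combination -(algebraMap ℚ k y') ^ 2 * hr
  obtain ⟨n, hn1⟩ := rat_int_of_integral (k := k) (x ^ 2 - p * y ^ 2)
    (hn ▸ (hI _).mul (hIρ _))
  obtain ⟨n', hn1'⟩ := rat_int_of_integral (k := k) (x' ^ 2 - p * y' ^ 2)
    (hn' ▸ (hI _).mul (hIρ _))
  have hnn : n * n' = 1 := by
    have h1 : algebraMap ℚ k ((x ^ 2 - p * y ^ 2) * (x' ^ 2 - p * y' ^ 2)) = algebraMap ℚ k 1 := by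
      rw [map_mul, ← hn, ← hn', map_one]
      have h2 : ρ E * ρ E' = 1 := by rw [← map_mul, hee, map_one]
      linear_combination ρ E * ρ E' * hee + h2
    have h2 := (algebraMap ℚ k).injective h1
    rw [hn1, hn1'] at h2
    exact_mod_cast h2
  have hN1 : x ^ 2 - p * y ^ 2 = 1 := by
    rcases Int.isUnit_iff.1 (IsUnit.of_mul_eq_one _ hnn) with h | h
    · rw [hn1, h]; simp
    · exfalso
      refine no_neg_one p hp (by omega) 1 (by simp) one_ne_zero x y ?_
      rw [Nat.cast_one, one_mul, hn1, h]; simp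
  obtain ⟨t, ht⟩ := rat_int_of_integral (k := k) (2 * x) (by
    have : algebraMap ℚ k (2 * x) = E + ρ E := by
      rw [hρE, hxy, map_mul, map_ofNat]; ring
    rw [this]
    exact (hI _).add (hIρ _))
  obtain ⟨z₀, hz₀⟩ := rat_int_of_integral (k := k) (p * (2 * y)) (by
    have : algebraMap ℚ k (p * (2 * y)) = (E - ρ E) * r := by
      rw [hρE, hxy]
      simp only [map_mul, map_ofNat, map_natCast]
      linear_combination -(2 * algebraMap ℚ k y) * hr
    rw [this]
    refine ((hI _).sub (hIρ _)).mul (IsIntegral.of_pow two_pos ?_)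
    rw [hr]
    exact_mod_cast (isIntegral_algebraMap (R := ℤ) (A := k) (x := (p : ℤ))))
  have hz1 : z₀ ^ 2 = p * (t ^ 2 - 4) := by
    have : ((z₀ ^ 2 : ℤ) : ℚ) = (p * (t ^ 2 - 4) : ℤ) := by
      push_cast
      rw [← ht, ← hz₀]
      linear_combination -4 * (p : ℚ) * hN1
    exact_mod_cast this
  have hpZ : Prime (p : ℤ) := Nat.prime_iff_prime_int.1 hp
  obtain ⟨z, rfl⟩ : (p : ℤ) ∣ z₀ := hpZ.dvd_of_dvd_pow (⟨_, hz1⟩ : (p : ℤ) ∣ z₀ ^ 2)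
  have hz2 : (t + 2) * (t - 2) = p * z ^ 2 :=
    mul_left_cancel₀ hpZ.ne_zero (by linear_combination -hz1)
  have htk : E + ρ E = (t : k) := by
    have := congrArg (algebraMap ℚ k) ht
    rw [map_mul, map_ofNat, map_intCast] at this
    rw [hρE, hxy, ← this]; ring
  have hN1k : E * ρ E = 1 := by rw [hn, hN1, map_one]
  have hkey : (1 + E) ^ 2 = E * (t + 2) := by
    rw [← htk]; linear_combination -hN1k
  by_cases ht2 : t + 2 = 0
  · have h1 : (t : k) + 2 = 0 := by exact_mod_cast ht2
    rw [h1, mul_zero] at hkey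
    have h2 := pow_eq_zero_iff two_ne_zero |>.1 hkey
    exact ⟨1, -1, Or.inr rfl, Or.inl (by linear_combination h2)⟩
  · obtain ⟨ε, m, hε, hm⟩ := core_sq p hp p (Or.inl rfl) (t + 2) (t - 2) z ht2 hz2 (by norm_num)
    have hm0 : (m : k) ≠ 0 := by
      intro h
      have : m = 0 := by exact_mod_cast h
      rw [this] at hm
      simp at hm
      exact ht2 hm
    obtain ⟨c, hc, hc2⟩ : ∃ c : k, (c = 1 ∨ c = -1) ∧ (t : k) + 2 = c * ε * m ^ 2 := by
      rcases Int.natAbs_eq (t + 2) with h | h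
      · refine ⟨1, Or.inl rfl, ?_⟩
        rw [hm] at h
        have := congrArg (Int.cast : ℤ → k) h
        push_cast at this
        rw [this]; ring
      · refine ⟨-1, Or.inr rfl, ?_⟩
        rw [hm] at h
        have := congrArg (Int.cast : ℤ → k) h
        push_cast at this
        rw [this]; ring
    have hcc : c * c = 1 := by rcases hc with rfl | rfl <;> ring
    rw [hc2] at hkey
    have hk2 : (ε : k) * E = c * ((1 + E) / m) ^ 2 := by
      field_simp
      rw [hkey]
      linear_combination -E * ε * m ^ 2 * hcc
    rcases hε with rfl | rfl | rfl | rfl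
    · exact ⟨_, c, hc, Or.inl (by simpa using hk2)⟩
    · exact ⟨_, c, hc, Or.inr (by simpa using hk2)⟩
    · refine ⟨(1 + E) / m / r, c, hc, Or.inl ?_⟩
      rw [div_pow _ r, hr, mul_div_assoc', ← hk2]
      field_simp
    · refine ⟨(1 + E) / m / r, c, hc, Or.inr ?_⟩
      rw [div_pow _ r, hr, mul_div_assoc', ← hk2]
      push_cast
      field_simp

theorem odd_biquad {k F : Type*} [Field k] [NumberField k] [Algebra.IsQuadraticExtension ℚ k]
    [Field F] [NumberField F] [Algebra k F] [Algebra.IsQuadraticExtension k F]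
    (p : ℕ) (hp : p.Prime) (h8 : p % 8 = 7)
    (r : k) (hr : r ^ 2 = p) (hd : ∀ q : ℚ, q ^ 2 ≠ p)
    (s : F) (hs : s ^ 2 = 2) (hns : s ∉ (algebraMap k F).range) : Odd (classNumber F) := by
  have hs' : s ^ 2 = algebraMap k F 2 := by rw [hs, map_ofNat]
  obtain ⟨σ, hσ⟩ := exists_gal_neg s (2 : k) hs' hns
  have hs0 : s ≠ 0 := by rintro rfl; norm_num at hs
  have hsI : IsIntegral ℤ s := IsIntegral.of_pow two_pos (by
    have h := isIntegral_algebraMap (R := ℤ) (A := F) (x := (2 : ℤ))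
    rw [map_ofNat] at h
    rw [hs]; exact h)
  set δ : 𝓞 F := ⟨s, hsI⟩ with hδ
  have hδs : (δ : F) = s := rfl
  have hδ2 : δ ^ 2 = 2 := by
    apply RingOfIntegers.ext
    have e2 : ((2 : 𝓞 F) : F) = 2 := map_ofNat (algebraMap (𝓞 F) F) 2
    exact hs.trans e2.symm
  have hfr : Module.finrank ℚ F = 4 := by
    rw [← Module.finrank_mul_finrank ℚ k F, Algebra.IsQuadraticExtension.finrank_eq_two,
      Algebra.IsQuadraticExtension.finrank_eq_two]
  refine odd_classNumber_of_quadratic (k := k) σ δ ?_ ?_ (odd_p p hp h8 r hr hd) ?_ ?_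
  · intro h
    exact hs0 (by rw [← hδs, h]; rfl)
  · apply RingOfIntegers.ext
    exact hσ
  · intro P hP hPb h2
    have h2P : ((2 : ℕ) : 𝓞 F) ∈ P := by
      rw [← hδ2] at h2
      have h3 : δ ^ 3 ∈ P := by rw [pow_succ]; exact h2
      have h4 := hP.mem_of_pow_mem _ h3
      rw [Nat.cast_ofNat, ← hδ2, sq]
      exact P.mul_mem_left _ h4
    obtain ⟨β, ω, ω', hβ, hω, hω', hωω, hβ4⟩ := exists_beta p hp h8 (algebraMap k F r) s
      (by rw [← map_pow, hr, map_natCast]) hs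
    refine prime_principal P hP 2 Nat.prime_two h2P (⟨β, hβ⟩ : 𝓞 F) (⟨ω, hω⟩ : 𝓞 F)
      (IsUnit.of_mul_eq_one (⟨ω', hω'⟩ : 𝓞 F) ?_) ?_
    · apply RingOfIntegers.ext
      exact hωω
    · rw [hfr]
      apply RingOfIntegers.ext
      have e1 : (((⟨β, hβ⟩ : 𝓞 F) ^ 4 : 𝓞 F) : F) = β ^ 4 := rfl
      have e2 : ((((2 : ℕ) : 𝓞 F) * ⟨ω, hω⟩ : 𝓞 F) : F) = (((2 : ℕ) : 𝓞 F) : F) * ω := rfl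
      have e3 : (((2 : ℕ) : 𝓞 F) : F) = 2 := by
        have := map_natCast (algebraMap (𝓞 F) F) 2
        exact this.trans (by norm_num)
      rw [e3] at e2
      exact e1.trans (hβ4.trans e2.symm)
  · intro e _ _
    obtain ⟨f, c, hc, hf⟩ := unit_sq p hp h8 r hr hd e
    set E := ((e : 𝓞 k) : k) with hE
    have hee : E * (((e⁻¹ : (𝓞 k)ˣ) : 𝓞 k) : k) = 1 := by
      rw [hE, ← map_mul]; simp
    set E' := (((e⁻¹ : (𝓞 k)ˣ) : 𝓞 k) : k) with hE'
    have hEI : IsIntegral ℤ (algebraMap k F E) :=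
      (e : 𝓞 k).isIntegral_coe.map (IsScalarTower.toAlgHom ℤ k F)
    have hEI' : IsIntegral ℤ (algebraMap k F E') :=
      ((e⁻¹ : (𝓞 k)ˣ) : 𝓞 k).isIntegral_coe.map (IsScalarTower.toAlgHom ℤ k F)
    have heeF : algebraMap k F E * algebraMap k F E' = 1 := by rw [← map_mul, hee, map_one]
    have main : ∀ w c' c'' : F, (c' = 1 ∨ c' = -1) → (c'' = 1 ∨ c'' = -1) →
        w ^ 2 = c' * algebraMap k F E → w * σ w = c'' * algebraMap k F E →
        ∃ v : (𝓞 F)ˣ, ((v : 𝓞 F) : F) * σ ((v : 𝓞 F) : F) = algebraMap k F E := by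
      intro w c' c'' hc' hc'' hw hwσ
      have hc'I : IsIntegral ℤ c' := by
        rcases hc' with rfl | rfl
        · exact isIntegral_one
        · exact isIntegral_one.neg
      have hcc : c' * c' = 1 := by rcases hc' with rfl | rfl <;> ring
      have hwI : IsIntegral ℤ w := IsIntegral.of_pow two_pos (by rw [hw]; exact hc'I.mul hEI)
      have hwI' : IsIntegral ℤ (w * (c' * algebraMap k F E')) := hwI.mul (hc'I.mul hEI')
      have hinv : (⟨w, hwI⟩ : 𝓞 F) * ⟨w * (c' * algebraMap k F E'), hwI'⟩ = 1 := by
        apply RingOfIntegers.ext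
        change w * (w * (c' * algebraMap k F E')) = 1
        linear_combination c' * algebraMap k F E' * hw + c' * c' * heeF + hcc
      set W : (𝓞 F)ˣ := Units.mkOfMulEqOne _ _ hinv with hW
      have hWw : ((W : 𝓞 F) : F) = w := rfl
      rcases hc'' with rfl | rfl
      · exact ⟨W, by rw [hWw, hwσ, one_mul]⟩
      · have hU : (1 + δ) * (δ - 1) = 1 := by linear_combination hδ2
        refine ⟨W * Units.mkOfMulEqOne _ _ hU, ?_⟩
        have : (((W * Units.mkOfMulEqOne _ _ hU : (𝓞 F)ˣ) : 𝓞 F) : F) = w * (1 + s) := rfl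
        rw [this, map_mul, map_add, map_one, hσ]
        linear_combination (1 - s ^ 2) * hwσ + algebraMap k F E * hs
    rcases hf with hf | hf
    · have hfF : algebraMap k F E = algebraMap k F c * algebraMap k F f ^ 2 := by
        rw [hf, map_mul, map_pow]
      have hcF : algebraMap k F c = 1 ∨ algebraMap k F c = -1 := by
        rcases hc with rfl | rfl <;> simp
      have hcc : algebraMap k F c * algebraMap k F c = 1 := by rcases hcF with h | h <;> rw [h] <;> ring
      refine main (algebraMap k F f) _ _ hcF hcF ?_ ?_
      · rw [hfF]; linear_combination -(algebraMap k F f) ^ 2 * hcc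
      · rw [hfF, σ.commutes]; linear_combination -(algebraMap k F f) ^ 2 * hcc
    · have hfF : 2 * algebraMap k F E = algebraMap k F c * algebraMap k F f ^ 2 := by
        rw [← map_pow, ← map_mul, ← hf, map_mul, map_ofNat]
      have hcF : algebraMap k F c = 1 ∨ algebraMap k F c = -1 := by
        rcases hc with rfl | rfl <;> simp
      have hcc : algebraMap k F c * algebraMap k F c = 1 := by rcases hcF with h | h <;> rw [h] <;> ring
      have h2 : (algebraMap k F f / s) ^ 2 = algebraMap k F c * algebraMap k F E := by
        rw [div_pow, hs, div_eq_iff two_ne_zero]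
        linear_combination -(algebraMap k F f) ^ 2 * hcc - algebraMap k F c * hfF
      refine main (algebraMap k F f / s) _ (-algebraMap k F c) hcF ?_ h2 ?_
      · rcases hcF with h | h <;> rw [h] <;> simp
      · rw [map_div₀, σ.commutes, hσ, div_neg, mul_neg, ← sq, h2]; ring

theorem gen_top {L : IntermediateField ℚ ℝ} {S : Set ℝ} (hL : L = IntermediateField.adjoin ℚ S)
    {k : Type*} [Field k] [CharZero k] [Algebra k L] (T : IntermediateField k L)
    (hT : ∀ a : L, (a : ℝ) ∈ S → a ∈ T) : T = ⊤ := by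
  let T' : IntermediateField ℚ ℝ :=
    { T.toSubfield.map (algebraMap L ℝ) with
      algebraMap_mem' := fun q => ⟨(q : L), SubfieldClass.ratCast_mem T q, by simp⟩ }
  have hle : L ≤ T' := by
    conv_lhs => rw [hL]
    rw [IntermediateField.adjoin_le_iff]
    intro a ha
    have haL : a ∈ L := by rw [hL]; exact IntermediateField.subset_adjoin _ _ ha
    exact ⟨⟨a, haL⟩, hT ⟨a, haL⟩ ha, rfl⟩
  rw [eq_top_iff]
  intro a _
  obtain ⟨b, hb, hba⟩ := hle a.2
  have : b = a := Subtype.ext hba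
  rw [← this]
  exact hb

theorem quad_of_sqrt {L : IntermediateField ℚ ℝ} (r : ℝ) (hL : L = ℚ⟮r⟯) (d : ℚ)
    (hr : r ^ 2 = d) (hd : ∀ q : ℚ, q ^ 2 ≠ d) :
    Algebra.IsQuadraticExtension ℚ L ∧ ∃ r' : L, (r' : ℝ) = r ∧ r' ^ 2 = (d : L) := by
  have hrL : r ∈ L := by rw [hL]; exact IntermediateField.mem_adjoin_simple_self ℚ r
  have hr2 : (⟨r, hrL⟩ : L) ^ 2 = (d : L) := Subtype.ext (by simpa using hr)
  refine ⟨⟨?_⟩, ⟨r, hrL⟩, rfl, hr2⟩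
  refine finrank_two_of_gen (⟨r, hrL⟩ : L) d (by rw [hr2]; simp) ?_ (gen_top hL _ ?_)
  · rintro ⟨q, hq⟩
    apply hd q
    have h1 := congrArg (Subtype.val) hq
    have h2 : (q : ℝ) = r := by simpa using h1
    have : ((q ^ 2 : ℚ) : ℝ) = d := by push_cast; rw [h2, hr]
    exact_mod_cast this
  · intro a ha
    have : a = ⟨r, hrL⟩ := Subtype.ext ha
    rw [this]
    exact IntermediateField.mem_adjoin_simple_self ℚ _

theorem prime_not_sq (p : ℕ) (hp : p.Prime) (q : ℚ) : q ^ 2 ≠ p := by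
  intro h
  have h1 : Irrational (√(p : ℝ)) := hp.irrational_sqrt
  apply h1
  refine ⟨|q|, ?_⟩
  have h2 : (p : ℝ) = (q : ℝ) ^ 2 := by exact_mod_cast h.symm
  rw [h2, Real.sqrt_sq_eq_abs]
  push_cast
  rfl

end Biquad

theorem classNumbers_of_quadratic_subfields_odd
    (p : ℕ) (hp : p.Prime) (hmod : p % 16 = 15)
    (k k' k₀ F : IntermediateField ℚ ℝ)
    (hk : k = ℚ⟮Real.sqrt p⟯)
    (hk' : k' = ℚ⟮Real.sqrt (2 * p)⟯)
    (hk₀ : k₀ = ℚ⟮Real.sqrt 2⟯)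
    (hF : F = IntermediateField.adjoin ℚ {Real.sqrt 2, Real.sqrt p})
    [NumberField k] [NumberField k'] [NumberField k₀] [NumberField F] :
    Odd (classNumber k) ∧ Odd (classNumber k') ∧ Odd (classNumber k₀) ∧
      Odd (classNumber F) := by
  have h8 : p % 8 = 7 := by omega
  have hp2 : p ≠ 2 := by rintro rfl; omega
  have hdp : ∀ q : ℚ, q ^ 2 ≠ p := prime_not_sq p hp
  have hd2 : ∀ q : ℚ, q ^ 2 ≠ 2 := fun q => by simpa using prime_not_sq 2 Nat.prime_two q
  have hd2p : ∀ q : ℚ, q ^ 2 ≠ 2 * p := by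
    intro q hq
    have hqI : IsIntegral ℤ (algebraMap ℚ ℚ q) := IsIntegral.of_pow two_pos (by
      rw [← map_pow, hq]
      exact_mod_cast (isIntegral_algebraMap (R := ℤ) (A := ℚ) (x := (2 * p : ℤ))))
    obtain ⟨n, rfl⟩ := rat_int_of_integral (k := ℚ) q hqI
    have h1 : n ^ 2 = 2 * p := by exact_mod_cast hq
    have h2 : Even (n ^ 2) := ⟨p, by rw [h1]; ring⟩
    obtain ⟨m, rfl⟩ := (Int.even_pow.1 h2).1
    have h3 : (p : ℤ) = 2 * m ^ 2 := by linarith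
    omega
  obtain ⟨qk, r, hrr, hr⟩ := quad_of_sqrt (L := k) (√(p : ℝ)) hk (p : ℚ)
    (by rw [Real.sq_sqrt (Nat.cast_nonneg p)]; simp) hdp
  obtain ⟨qk', r', hrr', hr'⟩ := quad_of_sqrt (L := k') (√(2 * p : ℝ)) hk' (2 * p : ℚ)
    (by rw [Real.sq_sqrt (by positivity)]; simp) hd2p
  obtain ⟨qk₀, r₀, hrr₀, hr₀⟩ := quad_of_sqrt (L := k₀) (√(2 : ℝ)) hk₀ (2 : ℚ)
    (by rw [Real.sq_sqrt (by positivity)]; simp) hd2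
  have hrp : r ^ 2 = (p : k) := by rw [hr]; simp
  refine ⟨odd_p p hp h8 r hrp hdp, odd_2p p hp h8 r' (by rw [hr']; simp) hd2p,
    odd_two r₀ (by rw [hr₀]; simp) hd2, ?_⟩
  have hkF : k ≤ F := by
    rw [hk, hF]
    exact IntermediateField.adjoin.mono _ _ _ (by simp)
  let _ : Algebra k F := (IntermediateField.inclusion hkF).toRingHom.toAlgebra
  have halg : ∀ a : k, ((algebraMap k F a : F) : ℝ) = (a : ℝ) := fun a => rfl
  have hsF : √(2 : ℝ) ∈ F := by
    rw [hF]; exact IntermediateField.subset_adjoin _ _ (by simp)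
  set s : F := ⟨√2, hsF⟩ with hs_def
  have hs : s ^ 2 = 2 := Subtype.ext (by
    change √(2 : ℝ) ^ 2 = 2
    exact Real.sq_sqrt (by norm_num))
  have hr0 : r ≠ 0 := by
    rintro rfl
    have : (p : k) = 0 := by rw [← hrp]; simp
    exact hp.ne_zero (by exact_mod_cast this)
  have hns : s ∉ (algebraMap k F).range := by
    rintro ⟨a, ha⟩
    have ha2 : a ^ 2 = 2 := by
      apply (algebraMap k F).injective
      rw [map_pow, ha, hs, map_ofNat]
    have hrQ : r ^ 2 = algebraMap ℚ k p := by rw [hrp]; simp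
    have hnr : r ∉ (algebraMap ℚ k).range := by
      rintro ⟨q, rfl⟩
      rw [← map_pow] at hrQ
      exact hdp q ((algebraMap ℚ k).injective hrQ)
    obtain ⟨ρ, hρ⟩ := exists_gal_neg r (p : ℚ) hrQ hnr
    obtain ⟨x, y, hxy⟩ := quad_decomp ρ r (p : ℚ) hr0 hrQ hρ a
    have h1 : (ρ a) ^ 2 = a ^ 2 := by rw [← map_pow, ha2, map_ofNat]
    have hρa : ρ a = algebraMap ℚ k x - algebraMap ℚ k y * r := by
      rw [hxy, map_add, map_mul, ρ.commutes, ρ.commutes, hρ]; ring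
    rcases sq_eq_sq_iff_eq_or_eq_neg.1 h1 with h | h
    · have h2 : algebraMap ℚ k y * r = 0 := by
        rw [hρa, hxy] at h
        linear_combination (-1 / 2 : k) * h
      rw [h2, add_zero] at hxy
      rw [hxy, ← map_pow] at ha2
      exact hd2 x ((algebraMap ℚ k).injective (by rw [ha2, map_ofNat]))
    · have h2 : algebraMap ℚ k x = 0 := by
        rw [hρa, hxy] at h
        linear_combination (1 / 2 : k) * h
      rw [h2, zero_add] at hxy
      rw [hxy, mul_pow, hrQ, ← map_pow, ← map_mul] at ha2
      have h3 : y ^ 2 * p = 2 := (algebraMap ℚ k).injective (by rw [ha2, map_ofNat])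
      exact hd2p (y * p) (by linear_combination (p : ℚ) * h3)
  have hquad : Algebra.IsQuadraticExtension k F := by
    refine ⟨finrank_two_of_gen s (2 : k) (by rw [hs, map_ofNat]) hns (gen_top hF _ ?_)⟩
    intro a ha
    rcases ha with ha | ha
    · have : a = s := Subtype.ext ha
      rw [this]
      exact IntermediateField.mem_adjoin_simple_self k s
    · have : a = algebraMap k F r := Subtype.ext (by rw [halg, hrr]; exact ha)
      rw [this]
      exact IntermediateField.algebraMap_mem _ r
  exact odd_biquad p hp h8 r hrp hdp s hs hns
end

section
/- Let p ≡ −1 (mod 16) be a prime. Then the class number of the quartic field K' = ℚ(√(2√p)), i.e., the number field ℚ[x]/(x⁴ − 4p), is odd. -/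
open Polynomial NumberField

namespace OddCl

/-- ideal square descent -/
theorem descend {R S : Type*} [CommRing R] [CommRing S] [IsDedekindDomain R] [IsDedekindDomain S]
    [Algebra R S] [Algebra.IsIntegral R S] [FaithfulSMul R S] (G : Submonoid S)
    (H1 : ∀ (q : Ideal R) (Q : Ideal S), q.IsPrime → Q.IsPrime → q ≠ ⊥ →
      Q ^ 2 ∣ q.map (algebraMap R S) →
      ∃ g ∈ G, q.map (algebraMap R S) = Ideal.span {g} ^ 2)
    (b : Ideal R) : b ≠ ⊥ → ∀ J : Ideal S, b.map (algebraMap R S) = J ^ 2 →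
      ∃ B : Ideal R, ∃ g ∈ G, J = B.map (algebraMap R S) * Ideal.span {g} := by
  have inj : ∀ I : Ideal R, I ≠ ⊥ → I.map (algebraMap R S) ≠ 0 := fun I hI h =>
    hI ((Ideal.map_eq_bot_iff_of_injective (FaithfulSMul.algebraMap_injective R S)).1 h)
  induction b using IsWellFounded.induction (· > · : Ideal R → Ideal R → Prop) with
  | ind b ih =>
  intro hb J hJ
  by_cases htop : b = ⊤
  · subst htop
    refine ⟨⊤, 1, one_mem _, ?_⟩
    rw [Ideal.map_top] at hJ ⊢
    rw [← Ideal.one_eq_top] at hJ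
    simp only [Ideal.span_singleton_one, ← Ideal.one_eq_top, mul_one]
    have : IsUnit J := IsUnit.of_mul_eq_one J (by rw [← sq, ← hJ])
    rw [Ideal.isUnit_iff] at this
    rw [this, Ideal.one_eq_top]
  obtain ⟨q, hq, hbq⟩ := Ideal.exists_le_maximal b htop
  have hq0 : q ≠ ⊥ := fun h => hb (by rw [h] at hbq; exact le_bot_iff.1 hbq)
  have hqp : Prime q := Ideal.prime_of_isPrime hq0 hq.isPrime
  obtain ⟨c, hc⟩ := Ideal.dvd_iff_le.2 hbq
  have hc0 : c ≠ ⊥ := by rintro rfl; exact hb (by simpa using hc)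
  have step : ∀ c d : Ideal R, b = d * c → d ≠ ⊤ → c > b := by
    intro c d h hd
    have hc0 : c ≠ ⊥ := by rintro rfl; exact hb (by simpa using h)
    refine lt_of_le_of_ne (h ▸ Ideal.mul_le_right) ?_
    intro hbc
    rw [hbc] at h
    apply hd
    have : 1 * c = d * c := by simpa using h
    rw [← mul_right_cancel₀ hc0 this, Ideal.one_eq_top]
  by_cases hqc : q ∣ c
  · obtain ⟨c', rfl⟩ := hqc
    rw [← mul_assoc, ← sq] at hc
    have hJ' := hJ
    rw [hc, Ideal.map_mul, Ideal.map_pow] at hJ'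
    have hdvd : q.map (algebraMap R S) ∣ J :=
      (UniqueFactorizationMonoid.pow_dvd_pow_iff_dvd (n := 2) (by norm_num)).1 ⟨_, hJ'.symm⟩
    obtain ⟨J', rfl⟩ := hdvd
    have h2 : c'.map (algebraMap R S) = J' ^ 2 := by
      rw [mul_pow] at hJ'
      exact mul_left_cancel₀ (pow_ne_zero 2 (inj q hq0)) hJ'
    have hc'0 : c' ≠ ⊥ := by rintro rfl; exact hb (by simpa using hc)
    have hq2 : q ^ 2 ≠ ⊤ := fun h => hq.ne_top (by
      rw [eq_top_iff, ← h]; exact Ideal.pow_le_self (by norm_num))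
    obtain ⟨B, g, hg, h⟩ := ih c' (step c' _ hc hq2) hc'0 J' h2
    exact ⟨q * B, g, hg, by rw [h, Ideal.map_mul, mul_assoc]⟩
  · obtain ⟨⟨Q, hQp, hQq⟩⟩ := q.nonempty_primesOver (S := S)
    have hQover : q = Q.comap (algebraMap R S) := hQq.over
    have hle : q.map (algebraMap R S) ≤ Q := Ideal.map_le_iff_le_comap.2 hQover.le
    have hQ0 : Q ≠ ⊥ := fun h => inj q hq0 (le_bot_iff.1 (h ▸ hle))
    have hQpr : Prime Q := Ideal.prime_of_isPrime hQ0 hQp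
    have hJ' := hJ
    rw [hc, Ideal.map_mul] at hJ'
    have hQJ : Q ∣ J := hQpr.dvd_of_dvd_pow (n := 2)
      (hJ' ▸ dvd_mul_of_dvd_left (Ideal.dvd_iff_le.2 hle) _)
    have hQc : ¬ Q ∣ c.map (algebraMap R S) := fun h => hqc (Ideal.dvd_iff_le.2 (by
      rw [hQover]; exact Ideal.map_le_iff_le_comap.1 (Ideal.dvd_iff_le.1 h)))
    have h2 : Q ^ 2 ∣ q.map (algebraMap R S) := by
      have : Q ^ 2 ∣ q.map (algebraMap R S) * c.map (algebraMap R S) :=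
        hJ' ▸ pow_dvd_pow_of_dvd hQJ 2
      exact hQpr.pow_dvd_of_dvd_mul_right 2 hQc this
    obtain ⟨g, hg, hgq⟩ := H1 q Q hq.isPrime hQp hq0 h2
    rw [hgq] at hJ'
    obtain ⟨J', rfl⟩ : Ideal.span {g} ∣ J :=
      (UniqueFactorizationMonoid.pow_dvd_pow_iff_dvd (n := 2) (by norm_num)).1 ⟨_, hJ'.symm⟩
    have h3 : c.map (algebraMap R S) = J' ^ 2 := by
      rw [mul_pow] at hJ'
      exact mul_left_cancel₀ (hgq ▸ inj q hq0) hJ'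
    obtain ⟨B, g', hg', h⟩ := ih c (step c _ hc hq.ne_top) hc0 J' h3
    refine ⟨B, g * g', mul_mem hg hg', ?_⟩
    rw [h, ← Ideal.span_singleton_mul_span_singleton]; ring

theorem mul_conj {F M : Type*} [Field F] [NumberField F] [Field M] [NumberField M] [Algebra F M]
    [IsGalois F M] (h2 : Module.finrank F M = 2) (σ : M ≃ₐ[F] M) (hσ : σ ≠ 1) (x : M) :
    algebraMap F M (Algebra.norm F x) = x * σ x := by
  classical
  rw [Algebra.norm_eq_prod_automorphisms]
  have hc : Fintype.card (M ≃ₐ[F] M) = 2 := by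
    rw [← Nat.card_eq_fintype_card, IsGalois.card_aut_eq_finrank, h2]
  have : (Finset.univ : Finset (M ≃ₐ[F] M)) = {1, σ} := by
    symm
    apply Finset.eq_univ_of_card
    rw [Finset.card_pair hσ.symm, hc]
  rw [this, Finset.prod_pair hσ.symm]; rfl

theorem int_mul_conj {F M : Type*} [Field F] [NumberField F] [Field M] [NumberField M] [Algebra F M]
    [IsGalois F M] (h2 : Module.finrank F M = 2) (σ : M ≃ₐ[F] M) (hσ : σ ≠ 1)
    (s : 𝓞 M ≃ₐ[𝓞 F] 𝓞 M)
    (hs : ∀ x, algebraMap (𝓞 M) M (s x) = σ (algebraMap (𝓞 M) M x)) (x : 𝓞 M) :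
    algebraMap (𝓞 F) (𝓞 M) (Algebra.intNorm (𝓞 F) (𝓞 M) x) = x * s x := by
  apply RingOfIntegers.coe_injective
  rw [map_mul, hs, ← mul_conj h2 σ hσ, ← Algebra.algebraMap_intNorm (A := 𝓞 F) (B := 𝓞 M)]
  rfl

theorem map_mul_conj {F M : Type*} [Field F] [NumberField F] [Field M] [NumberField M] [Algebra F M]
    [IsGalois F M] (h2 : Module.finrank F M = 2) (σ : M ≃ₐ[F] M) (hσ : σ ≠ 1) (s : 𝓞 M ≃ₐ[𝓞 F] 𝓞 M)
    (hs : ∀ x, algebraMap (𝓞 M) M (s x) = σ (algebraMap (𝓞 M) M x)) (I : Ideal (𝓞 M)) :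
    (Ideal.relNorm (𝓞 F) I).map (algebraMap (𝓞 F) (𝓞 M)) = I * I.map s := by
  by_cases hI : I = ⊥
  · subst hI; simp
  have hI' : Ideal.map s I ≠ ⊥ := by
    rwa [Ne, Ideal.map_eq_bot_iff_of_injective s.injective]
  have hle : (Ideal.relNorm (𝓞 F) I).map (algebraMap (𝓞 F) (𝓞 M)) ≤ I * I.map s := by
    rw [← Ideal.spanNorm_eq, Ideal.map_le_iff_le_comap, Ideal.spanNorm, Ideal.map,
      Ideal.span_le]
    rintro _ ⟨x, hx, rfl⟩
    have := int_mul_conj h2 σ hσ s hs x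
    simp only [SetLike.mem_coe, Ideal.mem_comap]
    rw [this]
    exact Ideal.mul_mem_mul hx (Ideal.mem_map_of_mem _ hx)
  obtain ⟨C, hC⟩ := Ideal.dvd_iff_le.2 hle
  have hfin : Module.finrank (𝓞 F) (𝓞 M) = 2 := by
    rw [← h2]; exact (IsFractionRing.finrank_eq (𝓞 F) F (𝓞 M) M).symm
  have hN : Ideal.absNorm (Ideal.map s I : Ideal (𝓞 M)) = Ideal.absNorm I := by
    rw [← Ideal.absNorm_relNorm (𝓞 F) (𝓞 M) (Ideal.map s I : Ideal (𝓞 M)), Ideal.relNorm_map_algEquiv,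
      Ideal.absNorm_relNorm]
  have h1 := Ideal.absNorm_algebraMap (𝓞 F) (𝓞 M) (Ideal.relNorm (𝓞 F) I)
  rw [Ideal.absNorm_relNorm, hfin, hC, map_mul, map_mul, hN, sq] at h1
  have h0 : Ideal.absNorm I ≠ 0 := by rwa [Ne, Ideal.absNorm_eq_zero_iff]
  have h3 : Ideal.absNorm C = 1 := by
    have : 0 < Ideal.absNorm I * Ideal.absNorm I := by positivity
    nlinarith
  rw [Ideal.absNorm_eq_one_iff] at h3
  rw [hC, h3, Ideal.mul_top]

theorem princ_pow {R : Type*} [CommRing R] [IsDedekindDomain R] [Fintype (ClassGroup R)]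
    (I : Ideal R) : Submodule.IsPrincipal (I ^ Fintype.card (ClassGroup R)) := by
  by_cases hI : I = ⊥
  · subst hI
    rw [← Ideal.zero_eq_bot, zero_pow Fintype.card_ne_zero]
    exact bot_isPrincipal
  have hI' : I ∈ nonZeroDivisors (Ideal R) := mem_nonZeroDivisors_of_ne_zero hI
  have : ClassGroup.mk0 (⟨I, hI'⟩ ^ Fintype.card (ClassGroup R)) = 1 := by
    rw [map_pow, pow_card_eq_one]
  exact (ClassGroup.mk0_eq_one_iff (pow_mem hI' _)).1 this

theorem princ_of_odd {R : Type*} [CommRing R] [IsDedekindDomain R]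
    (I : Ideal R) (n : ℕ) (hn : Odd n) (h2 : Submodule.IsPrincipal (I ^ 2))
    (h : Submodule.IsPrincipal (I ^ n)) : Submodule.IsPrincipal I := by
  by_cases hI : I = ⊥
  · subst hI; exact bot_isPrincipal
  have hI' : I ∈ nonZeroDivisors (Ideal R) := mem_nonZeroDivisors_of_ne_zero hI
  have e2 : ClassGroup.mk0 ⟨I, hI'⟩ ^ 2 = 1 := by
    rw [← map_pow]; exact (ClassGroup.mk0_eq_one_iff (pow_mem hI' _)).2 h2
  have en : ClassGroup.mk0 ⟨I, hI'⟩ ^ n = 1 := by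
    rw [← map_pow]; exact (ClassGroup.mk0_eq_one_iff (pow_mem hI' _)).2 h
  refine (ClassGroup.mk0_eq_one_iff hI').1 ?_
  obtain ⟨m, rfl⟩ := hn
  rw [pow_succ, pow_mul, e2, one_pow, one_mul] at en
  exact en

theorem hilbert {S E : Type*} [CommRing S] [IsDomain S]
    [EquivLike E S S] [RingEquivClass E S S] (s : E) (hs : ∀ x, s (s x) = x)
    (d : S) (hd0 : d ≠ 0) (hd : s d = -d) (X y : S) (hX : X ≠ 0)
    (h : X * s X = y * s y) : ∃ c, c ≠ 0 ∧ c * y = s c * X := by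
  by_cases hXy : X + y = 0
  · refine ⟨d, hd0, ?_⟩
    rw [hd, eq_neg_of_add_eq_zero_right hXy]; ring
  · refine ⟨X * s (X + y), mul_ne_zero hX
      (by rwa [Ne, EmbeddingLike.map_eq_zero_iff]), ?_⟩
    simp only [map_mul, hs, map_add]
    linear_combination (-X) * h

/-- the general criterion -/
theorem odd_class {F M : Type*} [Field F] [NumberField F] [Field M] [NumberField M] [Algebra F M]
    [IsGalois F M] (h2 : Module.finrank F M = 2) (σ : M ≃ₐ[F] M) (hσ : σ ≠ 1)
    (s : 𝓞 M ≃ₐ[𝓞 F] 𝓞 M)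
    (hs : ∀ x, algebraMap (𝓞 M) M (s x) = σ (algebraMap (𝓞 M) M x))
    (d : 𝓞 M) (hd0 : d ≠ 0) (hd : s d = -d)
    (hodd : Odd (classNumber F))
    (H1 : ∀ (q : Ideal (𝓞 F)) (Q : Ideal (𝓞 M)), q.IsPrime → Q.IsPrime → q ≠ ⊥ →
      Q ^ 2 ∣ q.map (algebraMap (𝓞 F) (𝓞 M)) →
      ∃ g : 𝓞 M, q.map (algebraMap (𝓞 F) (𝓞 M)) = Ideal.span {g} ^ 2)
    (H2 : ∀ (u : (𝓞 M)ˣ) (x y : 𝓞 M), x ≠ 0 → y ≠ 0 → s u = u → u * (x * s x) = y * s y →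
      ∃ v : (𝓞 M)ˣ, (u : 𝓞 M) = v * s v) :
    Odd (classNumber M) := by
  have hss : ∀ x, s (s x) = x := by
    intro x
    by_cases hx : x = 0
    · simp [hx]
    have h1 := int_mul_conj h2 σ hσ s hs x
    have h3 : s (x * s x) = x * s x := by rw [← h1]; exact s.commutes _
    rw [map_mul, mul_comm] at h3
    exact mul_right_cancel₀ (by simpa using hx) h3
  by_contra hev
  rw [Nat.not_odd_iff_even, even_iff_two_dvd] at hev
  obtain ⟨c, hc⟩ := exists_prime_orderOf_dvd_card 2 hev
  obtain ⟨⟨I, hI⟩, rfl⟩ := ClassGroup.mk0_surjective c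
  have hI0 : I ≠ ⊥ := nonZeroDivisors.ne_zero hI
  have hnot : ¬ Submodule.IsPrincipal I := by
    intro h
    rw [(ClassGroup.mk0_eq_one_iff hI).2 h] at hc
    simp at hc
  have hsq : Submodule.IsPrincipal (I ^ 2) := by
    refine (ClassGroup.mk0_eq_one_iff (pow_mem hI 2)).1 ?_
    have := pow_orderOf_eq_one (ClassGroup.mk0 ⟨I, hI⟩)
    rwa [hc, ← map_pow] at this
  apply hnot
  have extp : ∀ B : Ideal (𝓞 F), Submodule.IsPrincipal
      (B.map (algebraMap (𝓞 F) (𝓞 M)) ^ classNumber F) := by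
    intro B
    rw [← Ideal.map_pow]
    obtain ⟨b, hb⟩ := princ_pow B
    refine ⟨algebraMap _ _ b, ?_⟩
    rw [classNumber, hb]
    exact Ideal.map_span _ _ |>.trans (by simp)
  have pmul : ∀ I J : Ideal (𝓞 M), Submodule.IsPrincipal I → Submodule.IsPrincipal J →
      Submodule.IsPrincipal (I * J) := by
    rintro I J ⟨a, rfl⟩ ⟨b, rfl⟩
    exact ⟨a * b, Ideal.span_singleton_mul_span_singleton a b⟩
  have hsqs : Submodule.IsPrincipal (I.map s ^ 2) := by
    obtain ⟨t, ht⟩ := hsq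
    refine ⟨s t, ?_⟩
    rw [← Ideal.map_pow, ht]
    exact Ideal.map_span _ _ |>.trans (by simp)
  have hz : Submodule.IsPrincipal (I * I.map s) := by
    apply princ_of_odd _ _ hodd
    · rw [mul_pow]; exact pmul _ _ hsq hsqs
    · rw [← map_mul_conj h2 σ hσ s hs]; exact extp _
  obtain ⟨z, hz⟩ := hz
  obtain ⟨t, ht⟩ := hsq
  change _ = Ideal.span {z} at hz
  change _ = Ideal.span {t} at ht
  have hsI0 : I.map s ≠ ⊥ := by
    rwa [Ne, Ideal.map_eq_bot_iff_of_injective s.injective]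
  have hz0 : z ≠ 0 := by
    rintro rfl
    simp [hI0, hsI0] at hz
  have ht0 : t ≠ 0 := by
    rintro rfl
    rw [Ideal.span_singleton_eq_bot.2 rfl] at ht
    exact pow_ne_zero 2 hI0 ht
  have mspan : ∀ x : 𝓞 M, (Ideal.span {x}).map s = Ideal.span {s x} := by
    intro x
    exact Ideal.map_span _ _ |>.trans (by simp)
  have mm : (I.map s).map s = I := by
    change Ideal.map (s : 𝓞 M →+* 𝓞 M) (Ideal.map (s : 𝓞 M →+* 𝓞 M) I) = I
    rw [Ideal.map_map]
    convert Ideal.map_id I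
    ext x
    simp [hss]
  -- z I = t σI
  have e1 : Ideal.span {z} * I = Ideal.span {t} * I.map s := by
    rw [← hz, ← ht]; ring
  have e2 : Ideal.span {z * s z} = Ideal.span {t * s t} := by
    have e1' := congrArg (Ideal.map s) e1
    rw [Ideal.map_mul, Ideal.map_mul, mspan, mspan, mm] at e1'
    rw [← Ideal.span_singleton_mul_span_singleton, ← Ideal.span_singleton_mul_span_singleton]
    apply mul_right_cancel₀ (mul_ne_zero hI0 hsI0)
    calc _ = (Ideal.span {z} * I) * (Ideal.span {s z} * I.map s) := by ring
      _ = _ := by rw [e1, e1']; ring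
  obtain ⟨u, hu⟩ := Ideal.span_singleton_eq_span_singleton.1 e2
  have hus : s u = u := by
    have : s (z * s z * u) = s (t * s t) := by rw [hu]
    simp only [map_mul, hss] at this
    have hne : s z * z ≠ 0 := mul_ne_zero (by simpa using hz0) hz0
    apply mul_left_cancel₀ hne
    rw [this, mul_comm (s t), ← hu]; ring
  obtain ⟨v, hv⟩ := H2 u z t hz0 ht0 hus (by rw [← hu]; ring)
  obtain ⟨c, hc0, hcc⟩ := hilbert s hss d hd0 hd (z * v) t
    (mul_ne_zero hz0 v.ne_zero) (by
      simp only [map_mul]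
      rw [← hu, hv]; ring)
  have hfix : (Ideal.span {c} * I).map s = Ideal.span {c} * I := by
    rw [Ideal.map_mul, mspan]
    have hzv : Ideal.span {z * (v : 𝓞 M)} = Ideal.span {z} :=
      Ideal.span_singleton_mul_right_unit v.isUnit _
    apply mul_left_cancel₀ (a := Ideal.span {t}) (by simpa using ht0)
    calc _ = Ideal.span {s c} * (Ideal.span {t} * I.map s) := by ring
      _ = (Ideal.span {s c} * Ideal.span {z * (v : 𝓞 M)}) * I := by rw [← e1, hzv]; ring
      _ = (Ideal.span {c} * Ideal.span {t}) * I := by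
        rw [Ideal.span_singleton_mul_span_singleton, ← hcc,
          ← Ideal.span_singleton_mul_span_singleton]
      _ = _ := by ring
  set J := Ideal.span {c} * I with hJ
  have hJ0 : J ≠ ⊥ := mul_ne_zero (by simpa using hc0) hI0
  have hJ2 := map_mul_conj h2 σ hσ s hs J
  rw [hfix, ← sq] at hJ2
  obtain ⟨B, g, -, hB⟩ := descend (⊤ : Submonoid (𝓞 M)) (by simpa using H1)
    (Ideal.relNorm (𝓞 F) J) (by rwa [Ne, Ideal.relNorm_eq_bot_iff]) J hJ2
  have hcard := extp B
  apply princ_of_odd _ _ hodd ⟨t, ht⟩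
  have hp : Submodule.IsPrincipal (Ideal.span {c ^ classNumber F} * I ^ classNumber F) := by
    rw [← Ideal.span_singleton_pow, ← mul_pow, ← hJ, hB, mul_pow, Ideal.span_singleton_pow]
    exact pmul _ _ hcard ⟨_, rfl⟩
  have hcne : c ^ classNumber F ≠ 0 := pow_ne_zero _ hc0
  generalize c ^ classNumber F = c' at hp hcne
  obtain ⟨a, ha⟩ := hp
  change _ = Ideal.span {a} at ha
  have : Ideal.span {c'} ∣ Ideal.span {a} := ⟨_, ha.symm⟩
  rw [Ideal.dvd_iff_le, Ideal.span_singleton_le_span_singleton] at this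
  obtain ⟨a', rfl⟩ := this
  rw [← Ideal.span_singleton_mul_span_singleton] at ha
  exact ⟨a', mul_left_cancel₀ (by simpa using hcne) ha⟩

end OddCl

namespace OddCl

theorem fixed_of {F M : Type*} [Field F] [NumberField F] [Field M] [NumberField M] [Algebra F M]
    [IsGalois F M] (h2 : Module.finrank F M = 2) (σ : M ≃ₐ[F] M) (hσ : σ ≠ 1) (x : M)
    (hx : σ x = x) : ∃ a : F, algebraMap F M a = x := by
  classical
  have hc : Fintype.card (M ≃ₐ[F] M) = 2 := by
    rw [← Nat.card_eq_fintype_card, IsGalois.card_aut_eq_finrank, h2]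
  have : (Finset.univ : Finset (M ≃ₐ[F] M)) = {1, σ} := by
    symm
    apply Finset.eq_univ_of_card
    rw [Finset.card_pair hσ.symm, hc]
  have h : x ∈ Set.range (algebraMap F M) := by
    rw [IsGalois.mem_range_algebraMap_iff_fixed]
    intro f
    have hf : f ∈ (Finset.univ : Finset (M ≃ₐ[F] M)) := Finset.mem_univ f
    rw [this, Finset.mem_insert, Finset.mem_singleton] at hf
    rcases hf with rfl | rfl
    · rfl
    · exact hx
  exact h

theorem int_fixed_of {F M : Type*} [Field F] [NumberField F] [Field M] [NumberField M] [Algebra F M]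
    [IsGalois F M] (h2 : Module.finrank F M = 2) (σ : M ≃ₐ[F] M) (hσ : σ ≠ 1)
    (s : 𝓞 M ≃ₐ[𝓞 F] 𝓞 M)
    (hs : ∀ x, algebraMap (𝓞 M) M (s x) = σ (algebraMap (𝓞 M) M x)) (x : 𝓞 M)
    (hx : s x = x) : ∃ a : 𝓞 F, algebraMap (𝓞 F) (𝓞 M) a = x := by
  obtain ⟨a, ha⟩ := fixed_of h2 σ hσ (x : M) (by rw [← hs, hx])
  have hi : IsIntegral ℤ a := by
    rw [← isIntegral_algebraMap_iff (algebraMap F M).injective, ha]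
    exact x.isIntegral_coe
  refine ⟨⟨a, hi⟩, ?_⟩
  apply RingOfIntegers.coe_injective
  exact ha

theorem diff_mem {F M : Type*} [Field F] [NumberField F] [Field M] [NumberField M] [Algebra F M]
    [IsGalois F M] (h2 : Module.finrank F M = 2) (σ : M ≃ₐ[F] M) (hσ : σ ≠ 1)
    (s : 𝓞 M ≃ₐ[𝓞 F] 𝓞 M)
    (hs : ∀ x, algebraMap (𝓞 M) M (s x) = σ (algebraMap (𝓞 M) M x)) (hss : ∀ x, s (s x) = x)
    (x : 𝓞 M) (hx : s x ≠ x) (q : Ideal (𝓞 F)) (Q : Ideal (𝓞 M)) (hq : q.IsPrime) (hq0 : q ≠ ⊥)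
    (hQ : Q ^ 2 ∣ q.map (algebraMap (𝓞 F) (𝓞 M))) : x - s x ∈ Q := by
  have : q.IsMaximal := hq.isMaximal hq0
  have h1 : Q ∣ differentIdeal (𝓞 F) (𝓞 M) := by
    simpa using pow_sub_one_dvd_differentIdeal (𝓞 F) Q 2 hq0 hQ
  rw [Ideal.dvd_iff_le] at h1
  apply h1
  obtain ⟨t, ht⟩ := int_fixed_of h2 σ hσ s hs (x + s x) (by rw [map_add, hss, add_comm])
  obtain ⟨n, hn⟩ := int_fixed_of h2 σ hσ s hs (x * s x) (by rw [map_mul, hss, mul_comm])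
  have hadj : Algebra.adjoin F {algebraMap (𝓞 M) M x} = ⊤ := by
    have hint : IsIntegral F (algebraMap (𝓞 M) M x) := Algebra.IsIntegral.isIntegral _
    rw [← IntermediateField.adjoin_simple_toSubalgebra_of_isAlgebraic hint.isAlgebraic]
    have hp : (Module.finrank F M).Prime := by rw [h2]; exact Nat.prime_two
    have := IntermediateField.isSimpleOrder_of_finrank_prime F M hp
    rcases eq_bot_or_eq_top (IntermediateField.adjoin F {algebraMap (𝓞 M) M x}) with h | h
    · exfalso
      rw [IntermediateField.adjoin_simple_eq_bot_iff, IntermediateField.mem_bot] at h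
      obtain ⟨a, ha⟩ := h
      apply hx
      apply RingOfIntegers.coe_injective
      rw [hs, ← ha, AlgEquiv.commutes]
    · rw [h]; rfl
  have hmem := aeval_derivative_mem_differentIdeal (𝓞 F) F M x hadj
  have hf : aeval x (X ^ 2 - C t * X + C n : (𝓞 F)[X]) = 0 := by
    simp only [map_add, map_sub, map_mul, map_pow, aeval_X, aeval_C, ht, hn]
    ring
  obtain ⟨g, hg⟩ := minpoly.isIntegrallyClosed_dvd (Algebra.IsIntegral.isIntegral (R := 𝓞 F) x) hf
  have hd := congrArg (fun f => aeval x (derivative f)) hg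
  simp only [derivative_mul, map_add, map_mul, minpoly.aeval, zero_mul, add_zero] at hd
  simp only [derivative_mul, derivative_X_pow, derivative_C, derivative_X, map_add,
    map_sub, map_mul, aeval_C, aeval_X, ht] at hd
  have : x - s x = aeval x (derivative (minpoly (𝓞 F) x)) * aeval x g := by
    rw [← hd]; simp [show algebraMap (𝓞 F) (𝓞 M) 2 = 2 from map_ofNat _ 2]; ring
  rw [this]
  exact Ideal.mul_mem_right _ _ hmem

end OddCl

namespace OddCl

theorem sq_of_mul {a b c : ℤ} (ha : 0 ≤ a) (h : IsCoprime a b) (e : a * b = c ^ 2) :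
    ∃ r : ℤ, a = r ^ 2 := by
  obtain ⟨r, hr | hr⟩ := Int.sq_of_isCoprime h e
  · exact ⟨r, hr⟩
  · refine ⟨0, ?_⟩
    nlinarith [sq_nonneg r]

theorem mod8 (t : ℤ) : t ^ 2 % 8 = 0 ∨ t ^ 2 % 8 = 1 ∨ t ^ 2 % 8 = 4 := by
  have : t % 8 = 0 ∨ t % 8 = 1 ∨ t % 8 = 2 ∨ t % 8 = 3 ∨ t % 8 = 4 ∨ t % 8 = 5 ∨ t % 8 = 6 ∨
    t % 8 = 7 := by omega
  rcases this with h | h | h | h | h | h | h | h <;> simp [pow_two, Int.mul_emod, h]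

theorem split_mul {p : ℕ} (hp : p.Prime) {m n y : ℤ} (hm : 0 ≤ m) (hn : 0 ≤ n)
    (hc : IsCoprime m n) (e : m * n = p * y ^ 2) :
    ∃ r t : ℤ, (m = p * r ^ 2 ∧ n = t ^ 2) ∨ (m = t ^ 2 ∧ n = p * r ^ 2) := by
  have hp' : Prime (p : ℤ) := Nat.prime_iff_prime_int.1 hp
  have hp0 : (0 : ℤ) < p := by exact_mod_cast hp.pos
  rcases hp'.dvd_or_dvd (Dvd.intro _ e.symm) with h | h
  · obtain ⟨m', rfl⟩ := h
    have hm' : 0 ≤ m' := by nlinarith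
    have e' : m' * n = y ^ 2 := by
      apply mul_left_cancel₀ hp0.ne'; rw [← e]; ring
    have hc' : IsCoprime m' n := hc.of_mul_left_right
    obtain ⟨r, hr⟩ := sq_of_mul hm' hc' e'
    obtain ⟨t, ht⟩ := sq_of_mul hn hc'.symm (by rw [mul_comm]; exact e')
    exact ⟨r, t, Or.inl ⟨by rw [hr], ht⟩⟩
  · obtain ⟨n', rfl⟩ := h
    have hn' : 0 ≤ n' := by nlinarith
    have e' : m * n' = y ^ 2 := by
      apply mul_left_cancel₀ hp0.ne'; rw [← e]; ring
    have hc' : IsCoprime m n' := hc.of_mul_right_right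
    obtain ⟨r, hr⟩ := sq_of_mul hm hc' e'
    obtain ⟨t, ht⟩ := sq_of_mul hn' hc'.symm (by rw [mul_comm]; exact e')
    exact ⟨t, r, Or.inr ⟨hr, by rw [ht]⟩⟩

theorem pell_two (p : ℕ) (hp : p.Prime) (hmod : p % 8 = 7) : ∃ a b : ℤ, a ^ 2 - p * b ^ 2 = 2 := by
  have hp0 : (0 : ℤ) < p := by exact_mod_cast hp.pos
  have hns : ¬ IsSquare (p : ℤ) := (Nat.prime_iff_prime_int.1 hp).irreducible.not_isSquare
  obtain ⟨S, hS⟩ := Pell.IsFundamental.exists_of_not_isSquare hp0 hns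
  have hx := hS.1
  have hprop := S.prop
  have hmin : ∀ b : Pell.Solution₁ (p : ℤ), 1 < b.x → S.x ≤ b.x := fun b hb => hS.2.2 hb
  generalize hX : S.x = x at *
  generalize S.y = y at *
  have hpm : (p : ℤ) % 8 = 7 := by exact_mod_cast hmod
  obtain ⟨P, hP⟩ : ∃ P : ℤ, (p : ℤ) = 8 * P + 7 := ⟨p / 8, by omega⟩
  rcases Int.even_or_odd' x with ⟨m, hm | hm⟩
  · have hc : IsCoprime (x - 1) (x + 1) := ⟨m, 1 - m, by subst hm; ring⟩
    obtain ⟨r, t, ⟨h1, h2⟩ | ⟨h1, h2⟩⟩ := split_mul hp (by linarith) (by linarith) hc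
      (show (x - 1) * (x + 1) = p * y ^ 2 by linarith)
    · exact ⟨t, r, by linarith⟩
    · exfalso
      rw [hP] at h2
      have h3 : t ^ 2 + 2 = 8 * (P * r ^ 2) + 7 * r ^ 2 := by linarith
      have := mod8 t
      have := mod8 r
      omega
  · have hye : Even y := by
      by_contra hy
      rw [Int.not_even_iff_odd] at hy
      obtain ⟨n, rfl⟩ := hy
      have := hprop
      rw [hm, hP] at this
      have h8 : 2 * (2 * (m ^ 2 + m)) =
          2 * (4 * (P * (2 * n + 1) ^ 2) + 14 * (n ^ 2 + n) + 3) + 1 := by linarith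
      omega
    obtain ⟨n, hn⟩ := hye
    have hc : IsCoprime m (m + 1) := ⟨-1, 1, by ring⟩
    have e : m * (m + 1) = p * n ^ 2 := by
      subst hm hn
      nlinarith
    obtain ⟨r, t, ⟨h1, h2⟩ | ⟨h1, h2⟩⟩ := split_mul hp (by linarith) (by linarith) hc e
    · exfalso
      have hlt : 1 < |t| := by
        by_contra h
        have : t ^ 2 ≤ 1 := by rw [← sq_abs]; nlinarith [abs_nonneg t]
        linarith
      have := hmin (Pell.Solution₁.mk |t| r (by rw [sq_abs]; linarith))
        (by simpa using hlt)
      simp only [Pell.Solution₁.x_mk] at this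
      have : |t| ≤ t ^ 2 := by rw [← sq_abs]; nlinarith
      linarith
    · exfalso
      rw [hP] at h2
      have h3 : t ^ 2 + 1 = 8 * (P * r ^ 2) + 7 * r ^ 2 := by linarith
      have := mod8 t
      have := mod8 r
      omega

theorem not_norm (p : ℕ) (hp : p.Prime) (hmod : p % 8 = 7) (r t : ℚ) :
    r ^ 2 - p * t ^ 2 ≠ -1 := by
  intro h
  -- clear denominators
  have hd := r.den_nz
  have hd' := t.den_nz
  have key : ((r.num * t.den).natAbs ^ 2 + (r.den * t.den) ^ 2 : ℕ) = p * (t.num * r.den).natAbs ^ 2 := by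
    have h1 : (r.num : ℚ) = r * r.den := (Rat.mul_den_eq_num r).symm
    have h2 : (t.num : ℚ) = t * t.den := (Rat.mul_den_eq_num t).symm
    zify
    simp only [sq_abs]
    have : ((r.num * t.den) ^ 2 + (r.den * t.den) ^ 2 : ℚ) = p * (t.num * r.den) ^ 2 := by
      rw [h1, h2]
      linear_combination (r.den : ℚ) ^ 2 * (t.den : ℚ) ^ 2 * h
    exact_mod_cast this
  have : Fact p.Prime := ⟨hp⟩
  have h4 := (Nat.eq_sq_add_sq_iff (n := p * (t.num * r.den).natAbs ^ 2)).1 ⟨_, _, key.symm⟩ 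
    (q := p)
  have hne : (t.num * r.den).natAbs ≠ 0 := by
    intro h0
    rw [h0] at key
    have : 0 < (r.den * t.den) ^ 2 := by positivity
    simp at key
  rw [padicValNat.mul hp.ne_zero (pow_ne_zero 2 hne), padicValNat.pow, padicValNat_self] at h4
  have h5 := h4 (Nat.mem_primeFactors.2 ⟨hp, Dvd.intro _ rfl,
    mul_ne_zero hp.ne_zero (pow_ne_zero 2 hne)⟩) (by omega)
  rw [Nat.even_iff] at h5
  omega

end OddCl

namespace OddCl

/-- fixed units descend -/
theorem unit_fixed_of {F M : Type*} [Field F] [NumberField F] [Field M] [NumberField M]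
    [Algebra F M]
    [IsGalois F M] (h2 : Module.finrank F M = 2) (σ : M ≃ₐ[F] M) (hσ : σ ≠ 1)
    (s : 𝓞 M ≃ₐ[𝓞 F] 𝓞 M)
    (hs : ∀ x, algebraMap (𝓞 M) M (s x) = σ (algebraMap (𝓞 M) M x)) (u : (𝓞 M)ˣ)
    (hu : s u = u) : ∃ a : (𝓞 F)ˣ, algebraMap (𝓞 F) (𝓞 M) a = u := by
  obtain ⟨a, ha⟩ := int_fixed_of h2 σ hσ s hs u hu
  have hu' : s ((u⁻¹ : (𝓞 M)ˣ) : 𝓞 M) = (u⁻¹ : (𝓞 M)ˣ) := by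
    apply mul_left_cancel₀ u.ne_zero
    nth_rewrite 1 [← hu]
    rw [← map_mul, Units.mul_inv, map_one]
  obtain ⟨b, hb⟩ := int_fixed_of h2 σ hσ s hs _ hu'
  have hab : a * b = 1 := by
    apply FaithfulSMul.algebraMap_injective (𝓞 F) (𝓞 M)
    rw [map_mul, ha, hb, Units.mul_inv, map_one]
  exact ⟨⟨a, b, hab, by rw [mul_comm, hab]⟩, ha⟩

theorem not_sq_rat {p : ℕ} (hp : p.Prime) (r : ℚ) : r ^ 2 ≠ p := by
  intro h
  have : IsSquare (p : ℚ) := ⟨r, by rw [← h, sq]⟩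
  rw [Rat.isSquare_natCast_iff] at this
  exact hp.prime.irreducible.not_isSquare this

theorem conj_exists {F M : Type*} [Field F] [NumberField F] [Field M] [NumberField M]
    [Algebra F M] [IsGalois F M] (h2 : Module.finrank F M = 2) : ∃ σ : M ≃ₐ[F] M, σ ≠ 1 := by
  have hc : Nat.card (M ≃ₐ[F] M) = 2 := by rw [IsGalois.card_aut_eq_finrank, h2]
  have : Nontrivial (M ≃ₐ[F] M) := by
    rw [← Finite.one_lt_card_iff_nontrivial, hc]; norm_num
  exact exists_ne 1

theorem conj_conj {F M : Type*} [Field F] [NumberField F] [Field M] [NumberField M]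
    [Algebra F M] [IsGalois F M] (h2 : Module.finrank F M = 2) (σ : M ≃ₐ[F] M) (x : M) :
    σ (σ x) = x := by
  have hc : Nat.card (M ≃ₐ[F] M) = 2 := by rw [IsGalois.card_aut_eq_finrank, h2]
  have := pow_card_eq_one' (x := σ)
  rw [hc, sq] at this
  exact congrArg (fun f : M ≃ₐ[F] M => f x) this

theorem conj_sqrt {F M : Type*} [Field F] [NumberField F] [Field M] [NumberField M]
    [Algebra F M] [IsGalois F M] (h2 : Module.finrank F M = 2) (σ : M ≃ₐ[F] M) (hσ : σ ≠ 1)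
    (w : M) (c : F) (hw : w ^ 2 = algebraMap F M c) (hc : ∀ r : F, r ^ 2 ≠ c) : σ w = - w := by
  have h1 : (σ w) ^ 2 = w ^ 2 := by rw [← map_pow, hw, AlgEquiv.commutes]
  rcases sq_eq_sq_iff_eq_or_eq_neg.1 h1 with h | h
  · exfalso
    obtain ⟨a, ha⟩ := fixed_of h2 σ hσ w h
    apply hc a
    apply (algebraMap F M).injective
    rw [map_pow, ha, hw]
  · exact h

theorem comap_eq {R S : Type*} [CommRing R] [CommRing S] [IsDedekindDomain R] [IsDedekindDomain S]
    [Algebra R S] (q : Ideal R) (Q : Ideal S) (hq : q.IsPrime) (hQp : Q.IsPrime) (hq0 : q ≠ ⊥)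
    (hQ : Q ^ 2 ∣ q.map (algebraMap R S)) : Q.comap (algebraMap R S) = q := by
  have : q.IsMaximal := hq.isMaximal hq0
  have h1 : q ≤ Q.comap (algebraMap R S) := by
    rw [← Ideal.map_le_iff_le_comap, ← Ideal.dvd_iff_le]
    exact (dvd_pow_self Q two_ne_zero).trans hQ
  exact (this.eq_of_le (Ideal.IsPrime.comap (algebraMap R S)).ne_top h1).symm

theorem ratPrime {l : ℕ} (hl : l.Prime) : Prime (l : 𝓞 ℚ) := by
  have h := Nat.prime_iff_prime_int.1 hl
  rw [← MulEquiv.prime_iff Rat.ringOfIntegersEquiv]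
  simpa using h

theorem span_eq_of_mem {R : Type*} [CommRing R] [IsDedekindDomain R] (q : Ideal R) (hq : q.IsPrime)
    (x : R) (hx : Prime x) (h : x ∈ q) : q = Ideal.span {x} := by
  have hp : (Ideal.span {x}).IsPrime := (Ideal.span_singleton_prime hx.ne_zero).2 hx
  have : (Ideal.span {x}).IsMaximal := hp.isMaximal (by simpa using hx.ne_zero)
  exact (this.eq_of_le hq.ne_top ((Ideal.span_singleton_le_iff_mem _).2 h)).symm

theorem quad_odd {k : Type*} [Field k] [NumberField k] (h2 : Module.finrank ℚ k = 2)
    (p : ℕ) (hp : p.Prime) (hmod : p % 8 = 7) (w : k) (hw : w ^ 2 = p) :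
    Odd (classNumber k) := by
  have : Algebra.IsQuadraticExtension ℚ k := ⟨h2⟩
  have : IsGalois ℚ k := inferInstance
  obtain ⟨σ, hσ⟩ := conj_exists (F := ℚ) (M := k) h2
  have hσw : σ w = - w := conj_sqrt h2 σ hσ w p (by simpa using hw) (not_sq_rat hp)
  have hσσ := conj_conj h2 σ
  let s : 𝓞 k ≃ₐ[𝓞 ℚ] 𝓞 k := RingOfIntegers.mapAlgEquiv σ
  have hs : ∀ x, algebraMap (𝓞 k) k (s x) = σ (algebraMap (𝓞 k) k x) := fun x => rfl
  have hss : ∀ x, s (s x) = x := fun x => RingOfIntegers.coe_injective (by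
    rw [hs, hs, hσσ])
  have hwint : IsIntegral ℤ w := by
    refine IsIntegral.of_pow (n := 2) (by norm_num) ?_
    rw [hw]; exact_mod_cast isIntegral_algebraMap (R := ℤ) (A := k) (x := (p : ℤ))
  let W : 𝓞 k := ⟨w, hwint⟩
  have hWw : algebraMap (𝓞 k) k W = w := rfl
  have hW2 : W ^ 2 = p := RingOfIntegers.coe_injective (by rw [map_pow, hWw, hw, map_natCast])
  have hsW : s W = -W := RingOfIntegers.coe_injective (by rw [hs, hWw, hσw, map_neg, hWw])
  have hW0 : W ≠ 0 := by
    rintro h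
    rw [h] at hW2
    simp [hp.ne_zero, eq_comm] at hW2
  clear_value W s
  obtain ⟨a, b, hab⟩ := pell_two p hp hmod
  have hab' : (a : 𝓞 k) ^ 2 - p * b ^ 2 = 2 := by exact_mod_cast congrArg (Int.cast : ℤ → 𝓞 k) hab
  refine odd_class h2 σ hσ s hs W hW0 hsW (by rw [Rat.classNumber_eq]; exact odd_one) ?_ ?_
  · intro q Q hq hQp hq0 hQ
    have hsx : s W ≠ W := by
      rw [hsW]; intro h
      have : 2 * W = 0 := by linear_combination -h
      simp [hW0] at this
    have h1 := diff_mem h2 σ hσ s hs hss W hsx q Q hq hq0 hQ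
    have hco := comap_eq q Q hq hQp hq0 hQ
    have h4 : ((2 : ℕ) * (2 : ℕ) * (p : ℕ) : 𝓞 ℚ) ∈ q := by
      rw [← hco, Ideal.mem_comap]
      have := Ideal.mul_mem_left Q (2 * W) h1
      convert this using 1
      rw [hsW]
      simp only [map_mul, map_natCast]
      rw [← hW2]; push_cast; ring
    rcases hq.mem_or_mem h4 with h5 | h5
    · have h6 : ((2 : ℕ) : 𝓞 ℚ) ∈ q := (hq.mem_or_mem h5).elim id id
      refine ⟨a + b * W, ?_⟩
      rw [span_eq_of_mem q hq _ (ratPrime Nat.prime_two) h6, Ideal.map_span, Set.image_singleton,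
        map_natCast, Ideal.span_singleton_pow, Ideal.span_singleton_eq_span_singleton]
      refine ⟨⟨a ^ 2 - 1 + a * b * W, a ^ 2 - 1 - a * b * W, ?_, ?_⟩, ?_⟩
      · linear_combination (- (a : 𝓞 k) ^ 2 * b ^ 2) * hW2 + (a : 𝓞 k) ^ 2 * hab'
      · linear_combination (- (a : 𝓞 k) ^ 2 * b ^ 2) * hW2 + (a : 𝓞 k) ^ 2 * hab'
      · push_cast
        linear_combination hab' - (b : 𝓞 k) ^ 2 * hW2
    · refine ⟨W, ?_⟩
      rw [span_eq_of_mem q hq _ (ratPrime hp) h5, Ideal.map_span, Set.image_singleton,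
        map_natCast, Ideal.span_singleton_pow, hW2]
  · intro u x y hx hy hu hxy
    obtain ⟨u0, hu0⟩ := unit_fixed_of h2 σ hσ s hs u hu
    rcases Rat.RingOfIntegers.isUnit_iff.1 u0.isUnit with h | h
    · have : (u0 : 𝓞 ℚ) = 1 := RingOfIntegers.coe_injective (by simpa using h)
      exact ⟨1, by rw [← hu0, this]; simp⟩
    · exfalso
      have h' : (u0 : 𝓞 ℚ) = -1 := RingOfIntegers.coe_injective (by simpa using h)
      rw [← hu0, h'] at hxy
      have e := congrArg (algebraMap (𝓞 k) k) hxy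
      simp only [map_mul, map_neg, map_one, hs] at e
      have hx0 : algebraMap (𝓞 k) k x ≠ 0 := by simpa using hx
      set x' := algebraMap (𝓞 k) k x
      set y' := algebraMap (𝓞 k) k y
      have hsx0 : σ x' ≠ 0 := by simpa using hx0
      have hw0 : w ≠ 0 := by
        rintro rfl
        simp [hp.ne_zero, eq_comm] at hw
      set z := y' / x' with hz
      have hzz : z * σ z = -1 := by
        rw [hz, map_div₀]; field_simp; rw [← e]; ring
      obtain ⟨r, hr⟩ := fixed_of h2 σ hσ ((z + σ z) / 2) (by
        rw [map_div₀, map_add, hσσ, map_ofNat, add_comm])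
      obtain ⟨t, ht⟩ := fixed_of h2 σ hσ ((z - σ z) / (2 * w)) (by
        rw [map_div₀, map_sub, hσσ, map_mul, map_ofNat, hσw]
        field_simp; ring)
      apply not_norm p hp hmod r t
      apply (algebraMap ℚ k).injective
      rw [map_sub, map_mul, map_pow, map_pow, hr, ht, map_natCast, ← hw, map_neg, map_one, ← hzz]
      field_simp
      ring

end OddCl

namespace OddCl

theorem neg_one_tors {k : Type*} [Field k] [NumberField k] : (-1 : (𝓞 k)ˣ) ∈ Units.torsion k := by
  rw [Units.torsion, CommGroup.mem_torsion, isOfFinOrder_iff_pow_eq_one]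
  exact ⟨2, by norm_num, by simp⟩

theorem real_torsion {k : Type*} [Field k] [NumberField k] (ψ : k →+* ℝ) (z : (𝓞 k)ˣ)
    (hz : z ∈ Units.torsion k) (hpos : 0 < ψ (z : 𝓞 k)) : z = 1 := by
  have h := (Units.mem_torsion k).1 hz (InfinitePlace.mk (Complex.ofRealHom.comp ψ))
  rw [InfinitePlace.apply] at h
  simp only [RingHom.comp_apply, Complex.ofRealHom_eq_coe, Complex.norm_real, Real.norm_eq_abs] at h
  rw [abs_of_pos hpos] at h
  apply Units.ext
  apply RingOfIntegers.coe_injective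
  apply ψ.injective
  simpa using h

theorem unit_gen {k : Type*} [Field k] [NumberField k] (hr : Units.rank k ≤ 1) (ψ : k →+* ℝ) :
    ∃ e : (𝓞 k)ˣ, 0 < ψ (e : 𝓞 k) ∧ ∀ u : (𝓞 k)ˣ, 0 < ψ (u : 𝓞 k) → ∃ j : ℤ, u = e ^ j := by
  have h1 : ∃ e : (𝓞 k)ˣ, ∀ u : (𝓞 k)ˣ, ∃ j : ℤ, ∃ z ∈ Units.torsion k, u = z * e ^ j := by
    rcases Nat.le_one_iff_eq_zero_or_eq_one.1 hr with h | h
    · refine ⟨1, fun u => ⟨0, ?_⟩⟩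
      obtain ⟨⟨z, f⟩, hz, -⟩ := Units.exist_unique_eq_mul_prod k u
      refine ⟨z, z.2, hz.trans ?_⟩
      have : IsEmpty (Fin (Units.rank k)) := by rw [h]; infer_instance
      simp
    · have : Unique (Fin (Units.rank k)) := by rw [h]; infer_instance
      refine ⟨Units.fundSystem k default, fun u => ?_⟩
      obtain ⟨⟨z, f⟩, hz, -⟩ := Units.exist_unique_eq_mul_prod k u
      refine ⟨f default, z, z.2, hz.trans ?_⟩
      simp
  obtain ⟨e, he⟩ := h1
  have h0 : ∀ u : (𝓞 k)ˣ, ψ (u : 𝓞 k) ≠ 0 := fun u => by simp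
  have h2 : ∃ e : (𝓞 k)ˣ, 0 < ψ (e : 𝓞 k) ∧
      ∀ u : (𝓞 k)ˣ, ∃ j : ℤ, ∃ z ∈ Units.torsion k, u = z * e ^ j := by
    rcases lt_or_gt_of_ne (h0 e) with h | h
    · refine ⟨-e, by simpa using h, fun u => ?_⟩
      obtain ⟨j, z, hz, hu⟩ := he u
      refine ⟨j, z * (-1) ^ j, mul_mem hz (zpow_mem neg_one_tors _), ?_⟩
      rw [hu, mul_assoc, ← mul_zpow]; simp
    · exact ⟨e, h, he⟩
  obtain ⟨e, hpos, he⟩ := h2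
  refine ⟨e, hpos, fun u hu => ?_⟩
  obtain ⟨j, z, hz, h⟩ := he u
  refine ⟨j, ?_⟩
  let Ψ : (𝓞 k)ˣ →* ℝˣ := Units.map ((ψ.comp (algebraMap (𝓞 k) k)) : 𝓞 k →* ℝ)
  have hΨ : ∀ u : (𝓞 k)ˣ, ((Ψ u : ℝˣ) : ℝ) = ψ (u : 𝓞 k) := fun u => rfl
  have : z = 1 := by
    apply real_torsion ψ z hz
    rw [← hΨ] at hu hpos ⊢
    rw [h, map_mul, map_zpow, Units.val_mul, Units.val_zpow_eq_zpow_val] at hu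
    exact pos_of_mul_pos_left hu (zpow_pos hpos j).le
  rw [h, this, one_mul]

theorem rank_le {k L : Type*} [Field k] [NumberField k] [Field L] [NumberField L]
    (N : (𝓞 L)ˣ →* (𝓞 k)ˣ)
    (H : ∀ u, N u = 1 → ∃ v, N v = 1 ∧ (u = v ^ 2 ∨ u = - v ^ 2)) :
    Units.rank L ≤ Units.rank k := by
  have H1 : ∀ n : ℕ, ∀ u, N u = 1 → ∃ v, N v = 1 ∧ ∃ z ∈ Units.torsion L, u = z * v ^ (2 ^ n) := by
    intro n
    induction n with
    | zero => intro u hu; exact ⟨u, hu, 1, one_mem _, by simp⟩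
    | succ n ih =>
      intro u hu
      obtain ⟨v, hv, z, hz, h⟩ := ih u hu
      obtain ⟨x, hx, hvx⟩ := H v hv
      refine ⟨x, hx, ?_⟩
      rcases hvx with rfl | rfl
      · refine ⟨z, hz, ?_⟩
        rw [h, ← pow_mul, pow_succ, mul_comm 2]
      · refine ⟨z * (-1) ^ (2 ^ n), mul_mem hz (pow_mem neg_one_tors _), ?_⟩
        rw [h, mul_assoc, pow_succ (2 : ℕ), mul_comm (2 ^ n) 2, pow_mul, ← mul_pow]; simp
  have H2 : ∀ u, N u = 1 → u ∈ Units.torsion L := by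
    intro u hu
    obtain ⟨⟨z0, f0⟩, hz0, huniq⟩ := Units.exist_unique_eq_mul_prod L u
    have hd : ∀ n : ℕ, ∀ i, ((2 ^ n : ℕ) : ℤ) ∣ f0 i := by
      intro n i
      obtain ⟨v, -, z, hz, h⟩ := H1 n u hu
      obtain ⟨⟨z1, f1⟩, hz1, -⟩ := Units.exist_unique_eq_mul_prod L v
      have h2 := huniq ⟨⟨z, hz⟩ * z1 ^ (2 ^ n), fun i => f1 i * ((2 ^ n : ℕ) : ℤ)⟩ (by
        simp only at hz1 ⊢
        rw [h, hz1, mul_pow, ← Finset.prod_pow]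
        simp only [zpow_mul, zpow_natCast, Subgroup.coe_mul, Subgroup.coe_pow]
        rw [mul_assoc])
      have h3 := congrFun (congrArg Prod.snd h2) i
      simp only at h3
      rw [← h3]
      exact dvd_mul_left _ _
    have hf : ∀ i, f0 i = 0 := by
      intro i
      by_contra hne
      have h3 := Int.le_of_dvd (abs_pos.2 hne) ((dvd_abs _ _).2 (hd (f0 i).natAbs i))
      have h4 : (f0 i).natAbs < 2 ^ (f0 i).natAbs := Nat.lt_two_pow_self
      rw [Int.abs_eq_natAbs] at h3
      omega
    simp only at hz0
    rw [hz0]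
    simp [hf]
  let f := (MonoidHom.toAdditive N).toIntLinearMap
  have hker : Module.finrank ℤ (LinearMap.ker f) = 0 := by
    rw [Module.finrank_eq_zero_iff_isTorsion]
    rintro ⟨x, hx⟩
    have hx' : N x.toMul = 1 := hx
    have h5 := H2 _ hx'
    obtain ⟨n, hn, h6⟩ := isOfFinOrder_iff_pow_eq_one.1 ((CommGroup.mem_torsion _).1 h5)
    refine ⟨⟨(n : ℤ), mem_nonZeroDivisors_of_ne_zero (by exact_mod_cast hn.ne')⟩, ?_⟩
    apply Subtype.ext
    have : n • x = 0 := by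
      apply Additive.toMul.injective
      rw [toMul_nsmul, h6]; rfl
    simpa using this
  rw [← Units.finrank_eq, ← Units.finrank_eq]
  have h7 := Submodule.finrank_quotient_add_finrank (LinearMap.ker f)
  rw [hker, add_zero, LinearEquiv.finrank_eq (LinearMap.quotKerEquivRange f)] at h7
  rw [← h7]
  exact Submodule.finrank_le _

end OddCl

namespace OddCl

/-- units of relative norm one, when ramified primes are principal and the base class number is odd -/
theorem ker_form {F M : Type*} [Field F] [NumberField F] [Field M] [NumberField M] [Algebra F M]
    [IsGalois F M] (h2 : Module.finrank F M = 2) (σ : M ≃ₐ[F] M) (hσ : σ ≠ 1)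
    (s : 𝓞 M ≃ₐ[𝓞 F] 𝓞 M)
    (hs : ∀ x, algebraMap (𝓞 M) M (s x) = σ (algebraMap (𝓞 M) M x))
    (hss : ∀ x, s (s x) = x)
    (d : 𝓞 M) (hd0 : d ≠ 0) (hd : s d = -d)
    (hodd : Odd (classNumber F))
    (H1 : ∀ (q : Ideal (𝓞 F)) (Q : Ideal (𝓞 M)), q.IsPrime → Q.IsPrime → q ≠ ⊥ →
      Q ^ 2 ∣ q.map (algebraMap (𝓞 F) (𝓞 M)) →
      ∃ g : 𝓞 M, (s g = g ∨ s g = -g) ∧ q.map (algebraMap (𝓞 F) (𝓞 M)) = Ideal.span {g} ^ 2)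
    (u : (𝓞 M)ˣ) (hu : (u : 𝓞 M) * s u = 1) :
    ∃ v : (𝓞 M)ˣ, s v = u * v ∨ s v = -(u * v) := by
  obtain ⟨c, hc0, hc⟩ := hilbert s hss d hd0 hd 1 u one_ne_zero (by rw [hu, map_one, one_mul])
  rw [mul_one] at hc
  let G : Submonoid (𝓞 M) :=
    { carrier := {g | s g = g ∨ s g = -g}
      one_mem' := Or.inl (map_one s)
      mul_mem' := by
        rintro a b (ha | ha) (hb | hb) <;> simp [ha, hb] }
  have hfix : (Ideal.span {c}).map s = Ideal.span {c} := by
    refine (Ideal.map_span _ _ |>.trans (by simp : _ = Ideal.span {s c})).trans ?_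
    rw [← hc]
    exact Ideal.span_singleton_mul_right_unit u.isUnit _
  have hJ2 := map_mul_conj h2 σ hσ s hs (Ideal.span {c})
  rw [hfix, ← sq] at hJ2
  obtain ⟨B, g, hg, hB⟩ := descend G H1
    (Ideal.relNorm (𝓞 F) (Ideal.span {c})) (by rw [Ne, Ideal.relNorm_eq_bot_iff]; simpa using hc0)
    (Ideal.span {c}) hJ2
  have hgc : Ideal.span {g} ∣ Ideal.span {c} := ⟨_, by rw [hB, mul_comm]⟩
  rw [Ideal.dvd_iff_le, Ideal.span_singleton_le_span_singleton] at hgc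
  obtain ⟨c', rfl⟩ := hgc
  have hg0 : g ≠ 0 := left_ne_zero_of_mul hc0
  have hc'0 : c' ≠ 0 := right_ne_zero_of_mul hc0
  rw [← Ideal.span_singleton_mul_span_singleton, mul_comm] at hB
  have hB' := mul_right_cancel₀ (by simpa using hg0) hB
  have hBp : Submodule.IsPrincipal B := by
    apply princ_of_odd B _ hodd
    · have := congrArg (Ideal.relNorm (𝓞 F)) hB'
      rw [Ideal.relNorm_algebraMap, ← IsFractionRing.finrank_eq (𝓞 F) F (𝓞 M) M, h2] at this
      rw [← this, Ideal.relNorm_singleton]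
      exact ⟨_, rfl⟩
    · exact princ_pow B
  obtain ⟨β, hβ⟩ := hBp
  change B = Ideal.span {β} at hβ
  rw [hβ, Ideal.map_span, Set.image_singleton, eq_comm,
    Ideal.span_singleton_eq_span_singleton] at hB'
  obtain ⟨v, rfl⟩ := hB'
  refine ⟨v, ?_⟩
  have hβ0 := left_ne_zero_of_mul hc'0
  rw [map_mul, map_mul, AlgEquiv.commutes] at hc
  have hne : g * algebraMap (𝓞 F) (𝓞 M) β ≠ 0 := mul_ne_zero hg0 hβ0
  rcases hg with h | h
  · left
    apply mul_left_cancel₀ hne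
    rw [h] at hc
    linear_combination -hc
  · right
    apply mul_left_cancel₀ hne
    rw [h] at hc
    linear_combination hc

end OddCl

namespace OddCl

theorem final_abs {F M : Type*} [Field F] [NumberField F] [Field M] [NumberField M] [Algebra F M]
    [IsGalois F M] (h2 : Module.finrank F M = 2) (σ : M ≃ₐ[F] M) (hσ : σ ≠ 1)
    (s : 𝓞 M ≃ₐ[𝓞 F] 𝓞 M)
    (hs : ∀ x, algebraMap (𝓞 M) M (s x) = σ (algebraMap (𝓞 M) M x))
    (hss : ∀ x, s (s x) = x)
    (d : 𝓞 M) (hd0 : d ≠ 0) (hd : s d = -d)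
    (hodd : Odd (classNumber F))
    (H1 : ∀ (q : Ideal (𝓞 F)) (Q : Ideal (𝓞 M)), q.IsPrime → Q.IsPrime → q ≠ ⊥ →
      Q ^ 2 ∣ q.map (algebraMap (𝓞 F) (𝓞 M)) →
      ∃ g : 𝓞 M, (s g = g ∨ s g = -g) ∧ q.map (algebraMap (𝓞 F) (𝓞 M)) = Ideal.span {g} ^ 2)
    (φ : M →+* ℂ) (hφ : ∀ x, (starRingEnd ℂ) (φ x) = φ (σ x))
    (hrF : Units.rank F ≤ 1) (hrM : 2 ≤ Units.rank M) :
    Odd (classNumber M) := by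
  have hreal : ComplexEmbedding.IsReal (φ.comp (algebraMap F M)) := by
    rw [ComplexEmbedding.isReal_iff]
    ext x
    simp [ComplexEmbedding.conjugate_coe_eq, hφ]
  let ψ : F →+* ℝ := hreal.embedding
  have hψ : ∀ x, ((ψ x : ℝ) : ℂ) = φ (algebraMap F M x) := fun x =>
    hreal.coe_embedding_apply x
  clear_value ψ
  have hpos : ∀ (a : F) (x y : M), a ≠ 0 → x ≠ 0 →
      algebraMap F M a * (x * σ x) = y * σ y → 0 < ψ a := by
    intro a x y ha hx h
    have h1 := congrArg φ h
    rw [map_mul, map_mul, map_mul, ← hφ, ← hφ, Complex.mul_conj, Complex.mul_conj, ← hψ] at h1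
    have h3 : ψ a * Complex.normSq (φ x) = Complex.normSq (φ y) := by exact_mod_cast h1
    have h4 : 0 < Complex.normSq (φ x) := Complex.normSq_pos.2 (by simpa using hx)
    have h5 : 0 ≤ Complex.normSq (φ y) := Complex.normSq_nonneg _
    have h6 : ψ a ≠ 0 := by simpa using ha
    rcases lt_or_gt_of_ne h6 with h7 | h7
    · nlinarith
    · exact h7
  have inj := FaithfulSMul.algebraMap_injective (𝓞 F) (𝓞 M)
  let N : (𝓞 M)ˣ →* (𝓞 F)ˣ := Units.map (Algebra.intNorm (𝓞 F) (𝓞 M))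
  have hN : ∀ v, algebraMap (𝓞 F) (𝓞 M) (N v) = v * s v := fun v =>
    int_mul_conj h2 σ hσ s hs v
  clear_value N
  have hNpos : ∀ v, 0 < ψ ((N v : (𝓞 F)ˣ) : 𝓞 F) := by
    intro v
    apply hpos _ 1 (algebraMap (𝓞 M) M v) (by simp) one_ne_zero
    rw [map_one, mul_one, mul_one, ← hs, ← map_mul, ← hN]
    rfl
  obtain ⟨e, he, hgen⟩ := unit_gen hrF ψ
  let E : (𝓞 M)ˣ := Units.map (algebraMap (𝓞 F) (𝓞 M) : 𝓞 F →* 𝓞 M) e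
  have hE : (E : 𝓞 M) = algebraMap (𝓞 F) (𝓞 M) e := rfl
  have hEs : Units.map (s : 𝓞 M →* 𝓞 M) E = E := Units.ext (s.commutes _)
  clear_value E
  have hNE : N E = e ^ 2 := by
    apply Units.ext
    apply inj
    have h : s (E : 𝓞 M) = E := by rw [hE]; exact s.commutes _
    rw [hN, h, Units.val_pow_eq_pow_val, map_pow, hE, sq]
  have hex : ∃ v, N v = e := by
    by_contra hcon
    have key := rank_le N (by
      intro u hu
      have hu' : (u : 𝓞 M) * s u = 1 := by rw [← hN, hu, Units.val_one, map_one]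
      obtain ⟨v, hv⟩ := ker_form h2 σ hσ s hs hss d hd0 hd hodd H1 u hu'
      obtain ⟨j, hj⟩ := hgen (N v) (hNpos v)
      rcases Int.even_or_odd' j with ⟨m, rfl | rfl⟩
      · set x := v * (E ^ m)⁻¹ with hx
        have hNx : N x = 1 := by
          rw [hx, map_mul, hj, map_inv, map_zpow, hNE, zpow_mul, ← zpow_natCast, ← zpow_mul,
            ← zpow_mul]
          simp
        have hvx : v = x * E ^ m := by rw [hx]; group
        let S : (𝓞 M)ˣ →* (𝓞 M)ˣ := Units.map (s : 𝓞 M →* 𝓞 M)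
        have hS : ∀ y, ((S y : (𝓞 M)ˣ) : 𝓞 M) = s y := fun y => rfl
        have hSE : S E = E := hEs
        have hxx : x * S x = 1 := by
          apply Units.ext
          rw [Units.val_mul, hS, ← hN, hNx]; simp
        have hSx : S x = x⁻¹ := eq_inv_of_mul_eq_one_right hxx
        refine ⟨x⁻¹, by rw [map_inv, hNx, inv_one], ?_⟩
        rcases hv with hv | hv
        · left
          have h1 : S v = u * v := Units.ext hv
          rw [hvx, map_mul, map_zpow, hSE, hSx, ← mul_assoc] at h1
          have h3 := mul_right_cancel h1
          rw [sq, mul_inv_eq_iff_eq_mul.symm, inv_inv] 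
          exact h3.symm
        · right
          have h1 : S v = -(u * v) := Units.ext hv
          rw [hvx, map_mul, map_zpow, hSE, hSx, ← mul_assoc, ← neg_mul] at h1
          have h3 := mul_right_cancel h1
          rw [sq]
          nth_rewrite 1 [h3]
          simp
      · exfalso
        apply hcon
        refine ⟨v * (E ^ m)⁻¹, ?_⟩
        rw [map_mul, hj, map_inv, map_zpow, hNE, zpow_add, zpow_mul, ← zpow_natCast, ← zpow_mul,
            ← zpow_mul, zpow_one]
        simp)
    omega
  obtain ⟨v, hv⟩ := hex
  refine odd_class h2 σ hσ s hs d hd0 hd hodd (fun q Q a b c d => ?_) ?_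
  · obtain ⟨g, -, hg⟩ := H1 q Q a b c d
    exact ⟨g, hg⟩
  · intro u x y hx hy hu hxy
    obtain ⟨u0, hu0⟩ := unit_fixed_of h2 σ hσ s hs u hu
    have hp0 : 0 < ψ (u0 : 𝓞 F) := by
      apply hpos _ (algebraMap (𝓞 M) M x) (algebraMap (𝓞 M) M y) (by simp) (by simpa using hx)
      rw [← hs, ← hs, ← map_mul, ← map_mul, ← hxy, map_mul, ← hu0]
      rfl
    obtain ⟨j, hj⟩ := hgen u0 hp0
    refine ⟨v ^ j, ?_⟩
    rw [← hN, map_zpow, hv, ← hj, hu0]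

end OddCl

namespace OddCl

theorem pell_two' (p : ℕ) (hp : p.Prime) (hmod : p % 8 = 7) :
    ∃ a b : ℤ, a ^ 2 - p * b ^ 2 = 2 ∧ a % 2 = 1 ∧ (a * b) % 4 = 3 := by
  obtain ⟨a, b, h⟩ := pell_two p hp hmod
  have hm : ((p : ℤ) : ZMod 8) = 7 := by
    have : ((p : ℤ)) % 8 = 7 := by omega
    rw [show (7 : ZMod 8) = ((7 : ℤ) : ZMod 8) from rfl, ZMod.intCast_eq_intCast_iff']
    exact this
  have h8 : (a : ZMod 8) ^ 2 - 7 * (b : ZMod 8) ^ 2 = 2 := by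
    rw [← hm]; exact_mod_cast congrArg (Int.cast : ℤ → ZMod 8) h
  have ho : a % 2 = 1 ∧ b % 2 = 1 := by
    have hx : ∀ x y : ZMod 8, x ^ 2 - 7 * y ^ 2 = 2 → x.val % 2 = 1 ∧ y.val % 2 = 1 := by decide
    have h1 := hx _ _ h8
    have ha : (((a : ZMod 8).val : ℕ) : ℤ) = a % 8 := ZMod.val_intCast a
    have hb : (((b : ZMod 8).val : ℕ) : ℤ) = b % 8 := ZMod.val_intCast b
    omega
  have hab : (a * b) % 4 = 1 ∨ (a * b) % 4 = 3 := by
    have := Int.odd_iff.1 ((Int.odd_iff.2 ho.1).mul (Int.odd_iff.2 ho.2))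
    omega
  rcases hab with h1 | h1
  · refine ⟨a, -b, by rw [neg_sq, h], ho.1, ?_⟩
    rw [mul_neg]; omega
  · exact ⟨a, b, h, ho.1, h1⟩

theorem rank_quad {k : Type*} [Field k] [NumberField k] (h2 : Module.finrank ℚ k = 2) :
    Units.rank k ≤ 1 := by
  have h := InfinitePlace.card_add_two_mul_card_eq_rank k
  have h' := InfinitePlace.card_eq_nrRealPlaces_add_nrComplexPlaces k
  rw [Units.rank, h']
  omega

theorem prime_sqrt {k : Type*} [Field k] [NumberField k] (h2 : Module.finrank ℚ k = 2)
    (p : ℕ) (hp : p.Prime) (W : 𝓞 k) (hW : W ^ 2 = p) : Prime W := by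
  have hW0 : W ≠ 0 := by
    rintro h
    rw [h] at hW
    simp [hp.ne_zero, eq_comm] at hW
  rw [← Ideal.span_singleton_prime hW0]
  apply Ideal.isPrime_of_irreducible_absNorm
  have h1 : Ideal.absNorm (Ideal.span {W}) ^ 2 = p ^ 2 := by
    rw [← map_pow, Ideal.span_singleton_pow, hW, Ideal.absNorm_span_singleton]
    have : (p : 𝓞 k) = algebraMap ℤ (𝓞 k) p := by simp
    rw [this, Algebra.norm_algebraMap, RingOfIntegers.rank, h2]
    simp
  rw [Nat.pow_left_injective (n := 2) two_ne_zero h1]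
  exact hp

theorem rank_four {L : Type*} [Field L] [NumberField L] (θ : L) (p : ℕ) (hp : p.Prime)
    (hemb : ∀ z : ℂ, z ^ 4 = 4 * p → ∃ φ : L →+* ℂ, φ θ = z) (r : ℝ) (hr : 0 < r)
    (hr4 : r ^ 4 = 4 * p) : 2 ≤ Units.rank L := by
  have hrc : (r : ℂ) ^ 4 = 4 * p := by exact_mod_cast congrArg (Complex.ofReal) hr4
  obtain ⟨φ1, h1⟩ := hemb r hrc
  obtain ⟨φ2, h2⟩ := hemb (-r) (by rw [← hrc]; ring)
  obtain ⟨φ3, h3⟩ := hemb (Complex.I * r) (by rw [mul_pow, Complex.I_pow_four, one_mul, hrc])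
  have e12 : InfinitePlace.mk φ1 ≠ InfinitePlace.mk φ2 := by
    intro h
    rcases InfinitePlace.mk_eq_iff.1 h with h | h
    · have := congrArg (fun f : L →+* ℂ => (f θ).re) h
      simp [h1, h2] at this
      linarith
    · have := congrArg (fun f : L →+* ℂ => (f θ).re) h
      simp [h1, h2, ComplexEmbedding.conjugate_coe_eq] at this
      linarith
  have e13 : InfinitePlace.mk φ1 ≠ InfinitePlace.mk φ3 := by
    intro h
    rcases InfinitePlace.mk_eq_iff.1 h with h | h
    · have := congrArg (fun f : L →+* ℂ => (f θ).re) h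
      simp [h1, h3] at this
      linarith
    · have := congrArg (fun f : L →+* ℂ => (f θ).re) h
      simp [h1, h3, ComplexEmbedding.conjugate_coe_eq] at this
      linarith
  have e23 : InfinitePlace.mk φ2 ≠ InfinitePlace.mk φ3 := by
    intro h
    rcases InfinitePlace.mk_eq_iff.1 h with h | h
    · have := congrArg (fun f : L →+* ℂ => (f θ).re) h
      simp [h2, h3] at this
      linarith
    · have := congrArg (fun f : L →+* ℂ => (f θ).re) h
      simp [h2, h3, ComplexEmbedding.conjugate_coe_eq] at this
      linarith
  have hc : 2 < Fintype.card (InfinitePlace L) := Fintype.two_lt_card_iff.2 ⟨_, _, _, e12, e13, e23⟩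
  rw [Units.rank]
  omega

theorem main_abs {k L : Type*} [Field k] [NumberField k] [Field L] [NumberField L] [Algebra k L]
    (hk : Module.finrank ℚ k = 2) (h2 : Module.finrank k L = 2)
    (p : ℕ) (hp : p.Prime) (hmod : p % 8 = 7) (wk : k) (hwk : wk ^ 2 = p)
    (θ : L) (hθ : θ ^ 2 = 2 * algebraMap k L wk)
    (hemb : ∀ z : ℂ, z ^ 4 = 4 * p → ∃ φ : L →+* ℂ, φ θ = z)
    (hext : ∀ φ ψ : L →+* ℂ, φ θ = ψ θ → φ = ψ) : Odd (classNumber L) := by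
  have : Algebra.IsQuadraticExtension ℚ k := ⟨hk⟩
  have : IsGalois ℚ k := inferInstance
  have : Algebra.IsQuadraticExtension k L := ⟨h2⟩
  have : IsGalois k L := inferInstance
  have hc : ∀ r : k, r ^ 2 ≠ 2 * wk := by
    intro r hr
    obtain ⟨τ, hτ⟩ := conj_exists (F := ℚ) (M := k) hk
    have hτw : τ wk = - wk := conj_sqrt hk τ hτ wk p (by simpa using hwk) (not_sq_rat hp)
    obtain ⟨t, ht⟩ := fixed_of hk τ hτ (r * τ r) (by rw [map_mul, conj_conj hk τ, mul_comm])
    have h1 : t ^ 2 = - 4 * p := by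
      apply (algebraMap ℚ k).injective
      rw [map_pow, ht, mul_pow, ← map_pow, hr, map_mul, hτw, map_mul, map_neg]
      simp only [map_ofNat, map_natCast]
      rw [← hwk]; ring
    have hp0 : (0 : ℚ) < p := by exact_mod_cast hp.pos
    nlinarith [sq_nonneg t]
  obtain ⟨σ, hσ⟩ := conj_exists (F := k) (M := L) h2
  have hσθ : σ θ = - θ := conj_sqrt h2 σ hσ θ (2 * wk) (by rw [hθ, map_mul, map_ofNat]) hc
  have hσσ := conj_conj h2 σ
  let s : 𝓞 L ≃ₐ[𝓞 k] 𝓞 L := RingOfIntegers.mapAlgEquiv σ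
  have hs : ∀ x, algebraMap (𝓞 L) L (s x) = σ (algebraMap (𝓞 L) L x) := fun x => rfl
  clear_value s
  have hss : ∀ x, s (s x) = x := fun x => RingOfIntegers.coe_injective (by
    rw [hs, hs, hσσ])
  have hwint : IsIntegral ℤ wk := by
    refine IsIntegral.of_pow (n := 2) (by norm_num) ?_
    rw [hwk]; exact_mod_cast isIntegral_algebraMap (R := ℤ) (A := k) (x := (p : ℤ))
  let W : 𝓞 k := ⟨wk, hwint⟩
  have hWw : algebraMap (𝓞 k) k W = wk := rfl
  clear_value W
  have hW2 : W ^ 2 = p := RingOfIntegers.coe_injective (by rw [map_pow, hWw, hwk, map_natCast])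
  have hWp : Prime W := prime_sqrt hk p hp W hW2
  obtain ⟨a, b, hab, ha2, hab4⟩ := pell_two' p hp hmod
  have hab' : (a : 𝓞 k) ^ 2 - p * b ^ 2 = 2 := by exact_mod_cast congrArg (Int.cast : ℤ → 𝓞 k) hab
  have habL : (a : L) ^ 2 - p * b ^ 2 = 2 := by exact_mod_cast congrArg (Int.cast : ℤ → L) hab
  obtain ⟨ε, hε⟩ : ∃ ε : (𝓞 k)ˣ, (ε : 𝓞 k) = a ^ 2 - 1 + a * b * W := by
    refine ⟨⟨a ^ 2 - 1 + a * b * W, a ^ 2 - 1 - a * b * W, ?_, ?_⟩, rfl⟩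
    · linear_combination (- (a : 𝓞 k) ^ 2 * b ^ 2) * hW2 + (a : 𝓞 k) ^ 2 * hab'
    · linear_combination (- (a : 𝓞 k) ^ 2 * b ^ 2) * hW2 + (a : 𝓞 k) ^ 2 * hab'
  obtain ⟨w, hw⟩ : ∃ w : L, w = algebraMap k L wk := ⟨_, rfl⟩
  rw [← hw] at hθ
  have hw2 : w ^ 2 = p := by rw [hw, ← map_pow, hwk, map_natCast]
  have hσw : σ w = w := by rw [hw, AlgEquiv.commutes]
  have hwL : IsIntegral ℤ w := by rw [hw]; exact hwint.algebraMap
  set t : L := (a + b * w) * θ / 2 with ht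
  have ht2 : t ^ 2 = (a ^ 2 - 1 + a * b * w) * w := by
    rw [ht]
    linear_combination ((a + b * w) ^ 2 / 4) * hθ + (b ^ 2 * w / 2) * hw2 - w / 2 * habL
  have hσt : σ t = -t := by
    rw [ht, map_div₀, map_mul, map_add, map_mul, map_intCast, map_intCast, hσw, hσθ, map_ofNat]
    ring
  have hδint : IsIntegral ℤ ((1 + t) / 2) := by
    obtain ⟨m, hm⟩ : (4 : ℤ) ∣ a ^ 2 - 1 := by
      obtain ⟨c, hc⟩ : ∃ c, a = 2 * c + 1 := ⟨a / 2, by omega⟩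
      exact ⟨c ^ 2 + c, by rw [hc]; ring⟩
    obtain ⟨n, hn⟩ : (4 : ℤ) ∣ a * b * p - 1 := by
      have h3 : ((p : ℤ)) % 4 = 3 := by omega
      have := Int.mul_emod (a * b) p 4
      rw [hab4, h3] at this
      omega
    have hmL : (a : L) ^ 2 - 1 = 4 * m := by exact_mod_cast congrArg (Int.cast : ℤ → L) hm
    have hnL : (a : L) * b * p - 1 = 4 * n := by exact_mod_cast congrArg (Int.cast : ℤ → L) hn
    have hmon : (X ^ 2 - X : ℤ[X]).Monic := by monicity!
    have hdeg : (X ^ 2 - X : ℤ[X]).natDegree = 2 := by compute_degree!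
    refine IsIntegral.of_aeval_monic hmon (by rw [hdeg]; norm_num) ?_
    have : aeval ((1 + t) / 2) (X ^ 2 - X : ℤ[X]) = algebraMap ℤ L m * w + algebraMap ℤ L n := by
      simp only [map_sub, map_pow, aeval_X, eq_intCast]
      linear_combination ht2 / 4 + w / 4 * hmL + hnL / 4 + (a * b : L) / 4 * hw2
    rw [this]
    exact (isIntegral_algebraMap.mul hwL).add isIntegral_algebraMap
  have htint : IsIntegral ℤ t := by
    have : t = (1 + t) / 2 + (1 + t) / 2 - 1 := by ring
    rw [this]
    exact (hδint.add hδint).sub isIntegral_one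
  let T : 𝓞 L := ⟨t, htint⟩
  let D : 𝓞 L := ⟨(1 + t) / 2, hδint⟩
  have hTt : algebraMap (𝓞 L) L T = t := rfl
  have hDt : algebraMap (𝓞 L) L D = (1 + t) / 2 := rfl
  clear_value T D
  have hsT : s T = -T := RingOfIntegers.coe_injective (by rw [hs, hTt, hσt, map_neg, hTt])
  have hDs : D - s D = T := RingOfIntegers.coe_injective (by
    rw [map_sub, hs, hDt, hTt, map_div₀, map_add, map_one, hσt, map_ofNat]; ring)
  have hT2 : T ^ 2 = algebraMap (𝓞 k) (𝓞 L) (ε * W) := by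
    apply RingOfIntegers.coe_injective
    rw [map_pow, hTt, ht2, hε]
    have : algebraMap (𝓞 L) L (algebraMap (𝓞 k) (𝓞 L) ((a ^ 2 - 1 + a * b * W) * W)) =
      algebraMap k L (algebraMap (𝓞 k) k ((a ^ 2 - 1 + a * b * W) * W)) := rfl
    rw [this, hw]
    simp only [map_mul, map_add, map_sub, map_pow, map_one, map_intCast, hWw]
  have hT0 : T ≠ 0 := by
    intro h
    rw [h, zero_pow two_ne_zero, eq_comm, FaithfulSMul.algebraMap_eq_zero_iff] at hT2
    exact mul_ne_zero ε.ne_zero hWp.ne_zero hT2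
  obtain ⟨r, hr, hr4⟩ : ∃ r : ℝ, 0 < r ∧ r ^ 4 = 4 * p := by
    have hp0 : (0 : ℝ) < p := by exact_mod_cast hp.pos
    refine ⟨√(2 * √p), by positivity, ?_⟩
    have h1 : √(2 * √(p : ℝ)) ^ 2 = 2 * √p := Real.sq_sqrt (by positivity)
    have h3 : √(p : ℝ) ^ 2 = p := Real.sq_sqrt hp0.le
    calc _ = (√(2 * √(p : ℝ)) ^ 2) ^ 2 := by ring
      _ = _ := by rw [h1, mul_pow, h3]; norm_num
  have hrc : (r : ℂ) ^ 4 = 4 * p := by exact_mod_cast congrArg (Complex.ofReal) hr4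
  obtain ⟨φ, hφ⟩ := hemb (Complex.I * r) (by rw [mul_pow, Complex.I_pow_four, one_mul, hrc])
  have hφσ : ∀ x, (starRingEnd ℂ) (φ x) = φ (σ x) := by
    intro x
    have := hext (ComplexEmbedding.conjugate φ) (φ.comp (σ : L →+* L)) (by
      simp [ComplexEmbedding.conjugate_coe_eq, hφ, hσθ])
    exact congrArg (fun f : L →+* ℂ => f x) this
  refine final_abs h2 σ hσ s hs hss T hT0 hsT (quad_odd hk p hp hmod wk hwk) ?_ φ hφσ
    (rank_quad hk) (rank_four θ p hp hemb r hr hr4)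
  intro q Q hq hQp hq0 hQ
  have hsD : s D ≠ D := by
    intro h
    rw [h, sub_self] at hDs
    exact hT0 hDs.symm
  have h1 := diff_mem h2 σ hσ s hs hss D hsD q Q hq hq0 hQ
  rw [hDs] at h1
  have hco := comap_eq q Q hq hQp hq0 hQ
  have h4 : (ε : 𝓞 k) * W ∈ q := by
    rw [← hco, Ideal.mem_comap, ← hT2, sq]
    exact Ideal.mul_mem_left _ _ h1
  have h5 : W ∈ q := (hq.mem_or_mem h4).resolve_left (fun h =>
    hq.ne_top (Ideal.eq_top_of_isUnit_mem _ h ε.isUnit))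
  refine ⟨T, Or.inr hsT, ?_⟩
  rw [span_eq_of_mem q hq W hWp h5, Ideal.map_span, Set.image_singleton, Ideal.span_singleton_pow,
    hT2, map_mul, Ideal.span_singleton_mul_left_unit (ε.isUnit.map _)]

end OddCl



/-- For a prime `p ≡ -1 (mod 16)`, the class number of the quartic
field `K' = ℚ(√(2√p)) = ℚ[x]/(x⁴ - 4p)` is odd. -/
theorem classNumber_sqrt_two_sqrt_p_odd
    (p : ℕ) (hp : p.Prime) (hmod : p % 16 = 15)
    (K' : Type*) [Field K'] [NumberField K']
    (hK' : Nonempty (K' ≃ₐ[ℚ] AdjoinRoot (X ^ 4 - C (4 * p : ℚ)))) :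
    Odd (classNumber K') := by
  obtain ⟨e⟩ := hK'
  set f : ℚ[X] := X ^ 4 - C (4 * p : ℚ) with hf
  have hmon : f.Monic := monic_X_pow_sub_C _ (by norm_num)
  have hdeg : f.natDegree = 4 := natDegree_X_pow_sub_C
  have hroot : (AdjoinRoot.root f) ^ 4 = 4 * p := by
    have h := AdjoinRoot.eval₂_root f
    rw [hf, eval₂_sub, eval₂_X_pow, eval₂_C, sub_eq_zero, ← hf] at h
    rw [h, map_mul, map_ofNat, map_natCast]
  have hfin : Module.finrank ℚ K' = 4 := by
    rw [e.toLinearEquiv.finrank_eq, (AdjoinRoot.powerBasis' hmon).finrank,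
      AdjoinRoot.powerBasis'_dim, hdeg]
  set θ : K' := e.symm (AdjoinRoot.root f) with hθ
  have heθ : e θ = AdjoinRoot.root f := by rw [hθ, AlgEquiv.apply_symm_apply]
  have hθ4 : θ ^ 4 = 4 * p := by rw [hθ, ← map_pow, hroot, map_mul, map_ofNat, map_natCast]
  have hemb : ∀ z : ℂ, z ^ 4 = 4 * p → ∃ φ : K' →+* ℂ, φ θ = z := by
    intro z hz
    refine ⟨(AdjoinRoot.lift (algebraMap ℚ ℂ) z (by
      rw [hf, eval₂_sub, eval₂_X_pow, eval₂_C, hz]; simp)).comp (e : K' →+* AdjoinRoot f), ?_⟩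
    simp [heθ]
  have hext : ∀ φ ψ : K' →+* ℂ, φ θ = ψ θ → φ = ψ := by
    intro φ ψ h
    have h1 : φ.comp (e.symm : AdjoinRoot f →+* K') = ψ.comp (e.symm : AdjoinRoot f →+* K') := by
      apply AdjoinRoot.ringHom_ext
      · exact Subsingleton.elim _ _
      · exact h
    ext x
    have := congrArg (fun g : AdjoinRoot f →+* ℂ => g (e x)) h1
    simpa using this
  set y : K' := θ ^ 2 / 2 with hy
  have hy2 : y ^ 2 = p := by
    rw [hy, div_pow, ← pow_mul, hθ4]; norm_num
  let k := IntermediateField.adjoin ℚ {y}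
  let w : k := IntermediateField.AdjoinSimple.gen ℚ y
  have hwy : algebraMap k K' w = y := rfl
  have hw2 : w ^ 2 = p := by
    apply (algebraMap k K').injective
    rw [map_pow, hwy, hy2, map_natCast]
  have hyint : IsIntegral ℚ y := Algebra.IsIntegral.isIntegral y
  have hk : Module.finrank ℚ k = 2 := by
    rw [IntermediateField.adjoin.finrank hyint]
    have hm : (X ^ 2 - C (p : ℚ)).Monic := monic_X_pow_sub_C _ (by norm_num)
    have hirr : Irreducible (X ^ 2 - C (p : ℚ)) := by
      rw [hm.irreducible_iff_roots_eq_zero_of_degree_le_three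
        (by rw [natDegree_X_pow_sub_C]) (by rw [natDegree_X_pow_sub_C]; norm_num)]
      rw [Multiset.eq_zero_iff_forall_notMem]
      intro r hr
      have := (mem_roots'.1 hr).2
      simp only [IsRoot, eval_sub, eval_pow, eval_X, eval_C, sub_eq_zero] at this
      exact OddCl.not_sq_rat hp r this
    rw [← minpoly.eq_of_irreducible_of_monic hirr (by simp [hy2]) hm, natDegree_X_pow_sub_C]
  have hkL : Module.finrank k K' = 2 := by
    have := Module.finrank_mul_finrank ℚ k K'
    rw [hfin, hk] at this
    omega
  have : NumberField k := inferInstance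
  exact OddCl.main_abs hk hkL p hp (by omega) w hw2 θ (by rw [hwy, hy]; ring) hemb hext
end
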